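/- arXiv:2601.02546 — 8 statements merged into one kernel-verified Lean document; each statement's English description precedes it below -/
import Mathlib

section
/- The multiplication defined on P₃ = ℤ⁶ × 𝔽₂¹¹ by the explicit coordinate formulas is associative: for all ᾱ, β̄, γ̄ ∈ P₃, (ᾱ·β̄)·γ̄ = ᾱ·(β̄·γ̄). -/
/-!
Group the coordinates as `x = (α₁, α₂, α₃)`, `y = (α₄, α₅, α₆)` and `z = (α₁₅, α₁₄, α₁₃)`, and let
`♯` and `×` be the gradient `u♯ = (u₂u₃, u₁u₃, u₁u₂)` of the cubic form `u₁u₂u₃` and its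
polarization, so that `(u + v)♯ = u♯ + v♯ + u × v` and `u ⬝ (v × w)` is symmetric and trilinear.
The multiplication adds coordinates and twists them by `y × x'` in `z`, by `z ⬝ x' + y ⬝ x'♯` in
`α₁₆`, by `z ⬝ y' + y♯ ⬝ x' + y ⬝ (x' × y')` in `α₁₇`, and by bilinear terms in `α₇, …, α₁₂`.
Such a twisted sum is associative when the twist is a 2-cocycle, and a twist is a 2-cocycle as soon
as it fails to be additive by the same amount in either argument. For `α₁₆` this common defect is
`(y × x') ⬝ x''`, and for `α₁₇` it is `(y × x') ⬝ y'' + (y × y') ⬝ x''`: on the left it comes from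
the twist of `z` and the polarization of `y♯`, on the right from `x'♯` and `x' × y'`, by
the symmetry of the trilinear form.
-/

/-- `P₃ = ℤ⁶ × 𝔽₂¹¹`, with coordinates `a1,…,a6 : ℤ` and `a7,…,a17 : 𝔽₂`. -/
structure P3 where
  a1 : ℤ
  a2 : ℤ
  a3 : ℤ
  a4 : ℤ
  a5 : ℤ
  a6 : ℤ
  a7 : ZMod 2
  a8 : ZMod 2
  a9 : ZMod 2
  a10 : ZMod 2
  a11 : ZMod 2
  a12 : ZMod 2
  a13 : ZMod 2
  a14 : ZMod 2
  a15 : ZMod 2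
  a16 : ZMod 2
  a17 : ZMod 2

namespace P3

/-- Reduction of an integer coordinate modulo 2. -/
def r (x : ℤ) : ZMod 2 := (x : ZMod 2)

/-- The explicit multiplication on `P₃`. -/
def mul (α β : P3) : P3 where
  a1 := α.a1 + β.a1
  a2 := α.a2 + β.a2
  a3 := α.a3 + β.a3
  a4 := α.a4 + β.a4
  a5 := α.a5 + β.a5
  a6 := α.a6 + β.a6
  a7 := α.a7 + β.a7 + r α.a2 * r β.a1
  a8 := α.a8 + β.a8 + r α.a3 * r β.a1
  a9 := α.a9 + β.a9 + r α.a3 * r β.a2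
  a10 := α.a10 + β.a10 + r α.a5 * r β.a4
  a11 := α.a11 + β.a11 + r α.a6 * r β.a4
  a12 := α.a12 + β.a12 + r α.a6 * r β.a5
  a13 := α.a13 + β.a13 + r α.a4 * r β.a2 + r α.a5 * r β.a1
  a14 := α.a14 + β.a14 + r α.a4 * r β.a3 + r α.a6 * r β.a1
  a15 := α.a15 + β.a15 + r α.a5 * r β.a3 + r α.a6 * r β.a2
  a16 := α.a16 + β.a16 + α.a13 * r β.a3 + α.a14 * r β.a2 + α.a15 * r β.a1
    + r α.a4 * r β.a2 * r β.a3 + r α.a5 * r β.a1 * r β.a3 + r α.a6 * r β.a1 * r β.a2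
  a17 := α.a17 + β.a17 + α.a13 * r β.a6 + α.a14 * r β.a5 + α.a15 * r β.a4
    + r α.a4 * r α.a5 * r β.a3 + r α.a4 * r α.a6 * r β.a2 + r α.a5 * r α.a6 * r β.a1
    + r α.a4 * (r β.a2 * r β.a6 + r β.a5 * r β.a3)
    + r α.a5 * (r β.a1 * r β.a6 + r β.a4 * r β.a3)
    + r α.a6 * (r β.a1 * r β.a5 + r β.a4 * r β.a2)

/-- The zero tuple. -/
def zero : P3 := ⟨0, 0, 0, 0, 0, 0, 0, 0, 0, 0, 0, 0, 0, 0, 0, 0, 0⟩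

/-- The explicit inverse on `P₃`. -/
def inv (α : P3) : P3 where
  a1 := -α.a1
  a2 := -α.a2
  a3 := -α.a3
  a4 := -α.a4
  a5 := -α.a5
  a6 := -α.a6
  a7 := α.a7 + r α.a1 * r α.a2
  a8 := α.a8 + r α.a1 * r α.a3
  a9 := α.a9 + r α.a2 * r α.a3
  a10 := α.a10 + r α.a4 * r α.a5
  a11 := α.a11 + r α.a4 * r α.a6
  a12 := α.a12 + r α.a5 * r α.a6
  a13 := α.a13 + r α.a2 * r α.a4 + r α.a1 * r α.a5
  a14 := α.a14 + r α.a3 * r α.a4 + r α.a1 * r α.a6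
  a15 := α.a15 + r α.a3 * r α.a5 + r α.a2 * r α.a6
  a16 := α.a16 + α.a13 * r α.a3 + α.a14 * r α.a2 + α.a15 * r α.a1
    + r α.a4 * r α.a2 * r α.a3 + r α.a5 * r α.a1 * r α.a3 + r α.a6 * r α.a1 * r α.a2
  a17 := α.a17 + α.a13 * r α.a6 + α.a14 * r α.a5 + α.a15 * r α.a4
    + r α.a4 * r α.a5 * r α.a3 + r α.a4 * r α.a6 * r α.a2 + r α.a5 * r α.a6 * r α.a1
    + r α.a4 * (r α.a2 * r α.a6 + r α.a5 * r α.a3)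
    + r α.a5 * (r α.a1 * r α.a6 + r α.a4 * r α.a3)
    + r α.a6 * (r α.a1 * r α.a5 + r α.a4 * r α.a2)

/-- The map `σ : P₃ → P₃`. -/
def sigma (α : P3) : P3 where
  a1 := α.a4
  a2 := α.a5
  a3 := α.a6
  a4 := α.a1
  a5 := α.a2
  a6 := α.a3
  a7 := α.a10
  a8 := α.a11
  a9 := α.a12
  a10 := α.a7
  a11 := α.a8
  a12 := α.a9
  a13 := α.a13 + r α.a1 * r α.a5 + r α.a2 * r α.a4
  a14 := α.a14 + r α.a1 * r α.a6 + r α.a3 * r α.a4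
  a15 := α.a15 + r α.a2 * r α.a6 + r α.a3 * r α.a5
  a16 := α.a17 + r α.a1 * r α.a5 * r α.a6 + r α.a2 * r α.a4 * r α.a6 + r α.a3 * r α.a4 * r α.a5
  a17 := α.a16 + r α.a1 * r α.a2 * r α.a6 + r α.a1 * r α.a3 * r α.a5 + r α.a2 * r α.a3 * r α.a4

/-- The map `τ : P₃ → P₃`. -/
def tau (α : P3) : P3 where
  a1 := α.a1 - α.a4
  a2 := α.a2 - α.a5
  a3 := α.a3 - α.a6
  a4 := -α.a4
  a5 := -α.a5
  a6 := -α.a6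
  a7 := α.a7 + α.a10 + α.a13 + r α.a2 * r α.a4
  a8 := α.a8 + α.a11 + α.a14 + r α.a3 * r α.a4
  a9 := α.a9 + α.a12 + α.a15 + r α.a3 * r α.a5
  a10 := α.a10
  a11 := α.a11
  a12 := α.a12
  a13 := α.a13 + r α.a4 * r α.a5
  a14 := α.a14 + r α.a4 * r α.a6
  a15 := α.a15 + r α.a5 * r α.a6
  a16 := α.a16 + α.a17 + r α.a4 * r α.a5 * r α.a6
  a17 := α.a17

/-- The map `ρ := σ ∘ τ`. -/
def rho : P3 → P3 := sigma ∘ tau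

end P3

section Cocycle

variable {X A : Type*}

/-- A 2-cocycle, with trivial action on its values, for a binary operation `op` that need not be
known to be associative. -/
def IsAddCocycle [Add A] (op : X → X → X) (f : X → X → A) : Prop :=
  ∀ a b c, f a b + f (op a b) c = f a (op b c) + f b c

variable [AddCommSemigroup A] {op : X → X → X} {f : X → X → A}

theorem IsAddCocycle.of_eq_defect (D : X → X → X → A)
    (hleft : ∀ a b c, f (op a b) c = f a c + f b c + D a b c)
    (hright : ∀ a b c, f a (op b c) = f a b + f a c + D a b c) : IsAddCocycle op f := by
  intro a b c
  rw [hleft, hright]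
  ac_rfl

theorem IsAddCocycle.of_biadditive (hleft : ∀ a b c, f (op a b) c = f a c + f b c)
    (hright : ∀ a b c, f a (op b c) = f a b + f a c) : IsAddCocycle op f := by
  intro a b c
  rw [hleft, hright]
  ac_rfl

theorem IsAddCocycle.map_op_assoc (hf : IsAddCocycle op f) {φ : X → A}
    (hφ : ∀ a b, φ (op a b) = φ a + φ b + f a b) (a b c : X) :
    φ (op (op a b) c) = φ (op a (op b c)) := by
  calc φ (op (op a b) c) = φ a + φ b + φ c + (f a b + f (op a b) c) := by
        rw [hφ, hφ]
        ac_rfl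
    _ = φ a + φ b + φ c + (f a (op b c) + f b c) := by rw [hf]
    _ = φ (op a (op b c)) := by
        rw [hφ, hφ]
        ac_rfl

end Cocycle

section CubicForm

variable {R : Type*} [CommSemiring R]

/-- The adjoint `u♯` of the cubic form `u₀u₁u₂`, that is, its gradient. -/
def cubicAdjoint (u : Fin 3 → R) : Fin 3 → R :=
  ![u 1 * u 2, u 0 * u 2, u 0 * u 1]

/-- The polarization `u × v` of `cubicAdjoint`: the cross product without signs. -/
def cubicCross (u v : Fin 3 → R) : Fin 3 → R :=
  ![u 1 * v 2 + u 2 * v 1, u 0 * v 2 + u 2 * v 0, u 0 * v 1 + u 1 * v 0]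

/-- The strictly lower triangular entries of the matrix `u vᵀ`, row by row. -/
def strictLower (u v : Fin 3 → R) : Fin 3 → R :=
  ![u 1 * v 0, u 2 * v 0, u 2 * v 1]

theorem cubicAdjoint_add (u v : Fin 3 → R) :
    cubicAdjoint (u + v) = cubicAdjoint u + cubicAdjoint v + cubicCross u v := by
  simp only [cubicAdjoint, cubicCross, Pi.add_apply, Matrix.vec3_add]
  ring_nf

theorem cubicCross_comm (u v : Fin 3 → R) : cubicCross u v = cubicCross v u := by
  simp only [cubicCross]
  ring_nf

theorem cubicCross_add_left (u v w : Fin 3 → R) :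
    cubicCross (u + v) w = cubicCross u w + cubicCross v w := by
  simp only [cubicCross, Pi.add_apply, Matrix.vec3_add]
  ring_nf

theorem cubicCross_add_right (u v w : Fin 3 → R) :
    cubicCross u (v + w) = cubicCross u v + cubicCross u w := by
  simp only [cubicCross_comm u, cubicCross_add_left]

theorem dotProduct_cubicCross (u v w : Fin 3 → R) :
    u ⬝ᵥ cubicCross v w = cubicCross u v ⬝ᵥ w := by
  simp only [cubicCross, dotProduct, Fin.sum_univ_three, Matrix.cons_val]
  ring

theorem strictLower_add_left (u v w : Fin 3 → R) :
    strictLower (u + v) w = strictLower u w + strictLower v w := by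
  simp only [strictLower, Pi.add_apply, Matrix.vec3_add, add_mul]

theorem strictLower_add_right (u v w : Fin 3 → R) :
    strictLower u (v + w) = strictLower u v + strictLower u w := by
  simp only [strictLower, Pi.add_apply, Matrix.vec3_add, mul_add]

end CubicForm

/-- `P₃` with its integer triples replaced by elements of `V` and `𝔽₂` by `R`. The last five fields
are named after the degrees in `x` and `y` of their twists; `yx` plays the role of `z` above. -/
@[ext]
structure CubicExtension (V R : Type*) where
  x : V
  y : V
  xx : Fin 3 → R
  yy : Fin 3 → R
  yx : Fin 3 → R
  yxx : R
  yyx : R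

namespace CubicExtension

variable {V R : Type*} [AddZeroClass V] [CommSemiring R] (ρ : V →+ (Fin 3 → R))

/-- The twist of the coordinate `yxx` (`α₁₆` in `P₃`). -/
def yxxTwist (α β : CubicExtension V R) : R :=
  α.yx ⬝ᵥ ρ β.x + ρ α.y ⬝ᵥ cubicAdjoint (ρ β.x)

/-- The twist of the coordinate `yyx` (`α₁₇` in `P₃`). -/
def yyxTwist (α β : CubicExtension V R) : R :=
  α.yx ⬝ᵥ ρ β.y + cubicAdjoint (ρ α.y) ⬝ᵥ ρ β.x + ρ α.y ⬝ᵥ cubicCross (ρ β.x) (ρ β.y)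

/-- The multiplication of `P₃`, with `ρ` in place of reduction modulo 2. -/
def mul (α β : CubicExtension V R) : CubicExtension V R where
  x := α.x + β.x
  y := α.y + β.y
  xx := α.xx + β.xx + strictLower (ρ α.x) (ρ β.x)
  yy := α.yy + β.yy + strictLower (ρ α.y) (ρ β.y)
  yx := α.yx + β.yx + cubicCross (ρ α.y) (ρ β.x)
  yxx := α.yxx + β.yxx + yxxTwist ρ α β
  yyx := α.yyx + β.yyx + yyxTwist ρ α β

theorem isAddCocycle_strictLower_x :
    IsAddCocycle (mul ρ) fun α β => strictLower (ρ α.x) (ρ β.x) :=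
  .of_biadditive (fun _ _ _ => by simp only [mul, map_add, strictLower_add_left])
    fun _ _ _ => by simp only [mul, map_add, strictLower_add_right]

theorem isAddCocycle_strictLower_y :
    IsAddCocycle (mul ρ) fun α β => strictLower (ρ α.y) (ρ β.y) :=
  .of_biadditive (fun _ _ _ => by simp only [mul, map_add, strictLower_add_left])
    fun _ _ _ => by simp only [mul, map_add, strictLower_add_right]

theorem isAddCocycle_cubicCross :
    IsAddCocycle (mul ρ) fun α β => cubicCross (ρ α.y) (ρ β.x) :=
  .of_biadditive (fun _ _ _ => by simp only [mul, map_add, cubicCross_add_left])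
    fun _ _ _ => by simp only [mul, map_add, cubicCross_add_right]

theorem yxxTwist_mul_left (α β γ : CubicExtension V R) :
    yxxTwist ρ (mul ρ α β) γ = yxxTwist ρ α γ + yxxTwist ρ β γ +
      cubicCross (ρ α.y) (ρ β.x) ⬝ᵥ ρ γ.x := by
  simp only [yxxTwist, mul, map_add, add_dotProduct]
  ring

theorem yxxTwist_mul_right (α β γ : CubicExtension V R) :
    yxxTwist ρ α (mul ρ β γ) = yxxTwist ρ α β + yxxTwist ρ α γ +
      cubicCross (ρ α.y) (ρ β.x) ⬝ᵥ ρ γ.x := by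
  simp only [yxxTwist, mul, map_add, cubicAdjoint_add, dotProduct_add, dotProduct_cubicCross]
  ring

theorem isAddCocycle_yxxTwist : IsAddCocycle (mul ρ) (yxxTwist ρ) :=
  .of_eq_defect _ (yxxTwist_mul_left ρ) (yxxTwist_mul_right ρ)

theorem yyxTwist_mul_left (α β γ : CubicExtension V R) :
    yyxTwist ρ (mul ρ α β) γ = yyxTwist ρ α γ + yyxTwist ρ β γ +
      (cubicCross (ρ α.y) (ρ β.x) ⬝ᵥ ρ γ.y + cubicCross (ρ α.y) (ρ β.y) ⬝ᵥ ρ γ.x) := by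
  simp only [yyxTwist, mul, map_add, cubicAdjoint_add, add_dotProduct]
  ring

theorem yyxTwist_mul_right (α β γ : CubicExtension V R) :
    yyxTwist ρ α (mul ρ β γ) = yyxTwist ρ α β + yyxTwist ρ α γ +
      (cubicCross (ρ α.y) (ρ β.x) ⬝ᵥ ρ γ.y + cubicCross (ρ α.y) (ρ β.y) ⬝ᵥ ρ γ.x) := by
  have hcross : ρ α.y ⬝ᵥ cubicCross (ρ γ.x) (ρ β.y) = cubicCross (ρ α.y) (ρ β.y) ⬝ᵥ ρ γ.x := by
    rw [cubicCross_comm, dotProduct_cubicCross]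
  simp only [yyxTwist, mul, map_add, cubicCross_add_left, cubicCross_add_right,
    dotProduct_add, hcross, dotProduct_cubicCross _ (ρ β.x) (ρ γ.y)]
  ring

theorem isAddCocycle_yyxTwist : IsAddCocycle (mul ρ) (yyxTwist ρ) :=
  .of_eq_defect _ (yyxTwist_mul_left ρ) (yyxTwist_mul_right ρ)

end CubicExtension

open CubicExtension in
theorem P3_mul_assoc_general {V R : Type*} [AddMonoid V] [CommSemiring R]
    (ρ : V →+ (Fin 3 → R)) (α β γ : CubicExtension V R) :
    mul ρ (mul ρ α β) γ = mul ρ α (mul ρ β γ) := by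
  ext1
  case x => exact add_assoc ..
  case y => exact add_assoc ..
  case xx => exact (isAddCocycle_strictLower_x ρ).map_op_assoc (φ := xx) (fun _ _ => rfl) α β γ
  case yy => exact (isAddCocycle_strictLower_y ρ).map_op_assoc (φ := yy) (fun _ _ => rfl) α β γ
  case yx => exact (isAddCocycle_cubicCross ρ).map_op_assoc (φ := yx) (fun _ _ => rfl) α β γ
  case yxx => exact (isAddCocycle_yxxTwist ρ).map_op_assoc (φ := yxx) (fun _ _ => rfl) α β γ
  case yyx => exact (isAddCocycle_yyxTwist ρ).map_op_assoc (φ := yyx) (fun _ _ => rfl) α β γ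

namespace P3

/-- Reduction modulo 2 of a triple of integers. -/
def modTwo : (Fin 3 → ℤ) →+ (Fin 3 → ZMod 2) :=
  (Int.castAddHom (ZMod 2)).compLeft (Fin 3)

/-- The coordinates of `P₃` in blocks. Those of `yx` are reversed: `α₁₃, α₁₄, α₁₅` belong to the
index pairs `12, 13, 23`, and each pair is replaced by its complement in `{1, 2, 3}`. -/
def toCubicExtension (α : P3) : CubicExtension (Fin 3 → ℤ) (ZMod 2) where
  x := ![α.a1, α.a2, α.a3]
  y := ![α.a4, α.a5, α.a6]
  xx := ![α.a7, α.a8, α.a9]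
  yy := ![α.a10, α.a11, α.a12]
  yx := ![α.a15, α.a14, α.a13]
  yxx := α.a16
  yyx := α.a17

theorem toCubicExtension_injective : Function.Injective toCubicExtension := by
  rintro ⟨⟩ ⟨⟩ h
  simp_all [toCubicExtension]

theorem modTwo_cons (a b c : ℤ) : modTwo ![a, b, c] = ![r a, r b, r c] := by
  ext i
  fin_cases i <;> rfl

theorem toCubicExtension_mul (α β : P3) :
    toCubicExtension (mul α β) =
      CubicExtension.mul modTwo (toCubicExtension α) (toCubicExtension β) := by
  ext1
  case x | y => simp [toCubicExtension, mul, CubicExtension.mul]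
  case xx | yy => simp [toCubicExtension, mul, CubicExtension.mul, modTwo_cons, strictLower]
  case yx =>
    simp [toCubicExtension, mul, CubicExtension.mul, modTwo_cons, cubicCross, add_assoc]
  case yxx =>
    simp only [toCubicExtension, mul, CubicExtension.mul, modTwo_cons, CubicExtension.yxxTwist,
      cubicAdjoint, Matrix.cons_val, Matrix.vec3_dotProduct']
    ring
  case yyx =>
    simp only [toCubicExtension, mul, CubicExtension.mul, modTwo_cons, CubicExtension.yyxTwist,
      cubicAdjoint, cubicCross, Matrix.cons_val, Matrix.vec3_dotProduct']
    ring

end P3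

/-- the explicit multiplication on `P₃ = ℤ⁶ × 𝔽₂¹¹` is associative. -/
theorem P3_mul_assoc (α β γ : P3) :
    P3.mul (P3.mul α β) γ = P3.mul α (P3.mul β γ) := by
  apply P3.toCubicExtension_injective
  simp only [P3.toCubicExtension_mul, P3_mul_assoc_general]
end

section
/- With the explicit multiplication on P₃, the zero tuple 0 is a two-sided identity (0·ᾱ = ᾱ·0 = ᾱ for all ᾱ), and every ᾱ ∈ P₃ has the two-sided inverse β̄ given by: βᵢ = −αᵢ for i = 1,…,6; β₇ = α₇+α₁α₂; β₈ = α₈+α₁α₃; β₉ = α₉+α₂α₃; β₁₀ = α₁₀+α₄α₅; β₁₁ = α₁₁+α₄α₆; β₁₂ = α₁₂+α₅α₆; β₁₃ = α₁₃+α₂α₄+α₁α₅; β₁₄ = α₁₄+α₃α₄+α₁α₆; β₁₅ = α₁₅+α₃α₅+α₂α₆; β₁₆ = α₁₆+α₁₃α₃+α₁₄α₂+α₁₅α₁+α₄α₂α₃+α₅α₁α₃+α₆α₁α₂; β₁₇ = α₁₇+α₁₃α₆+α₁₄α₅+α₁₅α₄+α₄α₅α₃+α₄α₆α₂+α₅α₆α₁+α₄(α₂α₆+α₅α₃)+α₅(α₁α₆+α₄α₃)+α₆(α₁α₅+α₄α₂);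 that is, ᾱ·β̄ = β̄·ᾱ = 0. In particular P₃ with this multiplication is a group. -/
/-!
Group the coordinates into vectors: `x` and `y` are the reductions modulo 2 of `(α₁, α₂, α₃)` and
`(α₄, α₅, α₆)`, and `u = (α₉, α₈, α₇)`, `t = (α₁₂, α₁₁, α₁₀)`, `z = (α₁₅, α₁₄, α₁₃)`. The products
that twist `u` and `t` are values of the bilinear map `ℓ(v, w) = (v₃w₂, v₃w₁, v₂w₁)`, those that
twist `z` are a cross product, and in characteristic 2 the cross product is the polarization of
`v ↦ ℓ(v, v)`. For these three vectors the group axioms follow from bilinearity. In the coordinates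
`α₁₆` and `α₁₇` the defects of associativity are triple products, which cancel because in
characteristic 2 the triple product is invariant under all permutations; the defects of
`α⁻¹ * α = 1` are triple products with a repeated vector, which vanish.
-/

open Matrix

section HalfCross

variable {R : Type*} [CommRing R]

/-- The bilinear map `(v, w) ↦ (v₃w₂, v₃w₁, v₂w₁)` on `R³`: the terms `vᵢwⱼ` with `j < i` of the
cross product, without their signs, with the term `vᵢwⱼ` in the position complementary to
`{i, j}`. -/
def halfCross : (Fin 3 → R) →ₗ[R] (Fin 3 → R) →ₗ[R] Fin 3 → R :=
  LinearMap.mk₂ R (fun v w => ![v 2 * w 1, v 2 * w 0, v 1 * w 0])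
    (fun _ _ _ => by simp only [vec3_add, Pi.add_apply, add_mul])
    (fun _ _ _ => by simp only [smul_vec3, Pi.smul_apply, smul_mul_assoc])
    (fun _ _ _ => by simp only [vec3_add, Pi.add_apply, mul_add])
    (fun _ _ _ => by simp only [smul_vec3, Pi.smul_apply, mul_smul_comm])

theorem halfCross_apply (v w : Fin 3 → R) :
    halfCross v w = ![v 2 * w 1, v 2 * w 0, v 1 * w 0] := rfl

theorem cross_dot_eq_dot_cross (u v w : Fin 3 → R) : u ⨯₃ v ⬝ᵥ w = u ⬝ᵥ v ⨯₃ w := by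
  rw [dotProduct_comm, triple_product_permutation]

variable [CharP R 2]

theorem cross_apply_of_charTwo (v w : Fin 3 → R) :
    v ⨯₃ w = ![v 1 * w 2 + v 2 * w 1, v 0 * w 2 + v 2 * w 0, v 0 * w 1 + v 1 * w 0] := by
  simp only [cross_apply, CharTwo.sub_eq_add, add_comm (v 2 * w 0)]

theorem cross_comm_of_charTwo (v w : Fin 3 → R) : v ⨯₃ w = w ⨯₃ v := by
  rw [← neg_cross, CharTwo.neg_eq]

theorem halfCross_add_halfCross_swap (v w : Fin 3 → R) :
    halfCross v w + halfCross w v = v ⨯₃ w := by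
  rw [halfCross_apply, halfCross_apply, cross_apply_of_charTwo, vec3_add]
  apply vec3_eq <;> ring

theorem halfCross_add_self (v w : Fin 3 → R) :
    halfCross (v + w) (v + w) = halfCross v v + halfCross w w + v ⨯₃ w := by
  rw [← halfCross_add_halfCross_swap]
  simp only [map_add, LinearMap.add_apply]
  abel

end HalfCross

namespace P3

instance : Mul P3 := ⟨mul⟩

instance : One P3 := ⟨zero⟩

instance : Inv P3 := ⟨inv⟩

theorem mul_def (α β : P3) : α * β = mul α β := rfl

theorem inv_def (α : P3) : α⁻¹ = inv α := rfl

/-- The first three integer coordinates of `α`, as a vector. -/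
def xInt (α : P3) : Fin 3 → ℤ := ![α.a1, α.a2, α.a3]

/-- The last three integer coordinates of `α`, as a vector. -/
def yInt (α : P3) : Fin 3 → ℤ := ![α.a4, α.a5, α.a6]

/-- Coordinatewise reduction modulo 2 of integer vectors. -/
def reduce : (Fin 3 → ℤ) →+ (Fin 3 → ZMod 2) := (Int.castAddHom (ZMod 2)).compLeft (Fin 3)

/-- The reduction of `xInt α` modulo 2. -/
def x (α : P3) : Fin 3 → ZMod 2 := reduce α.xInt

/-- The reduction of `yInt α` modulo 2. -/
def y (α : P3) : Fin 3 → ZMod 2 := reduce α.yInt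

/-- The vector `(α₉, α₈, α₇)`, in the order matching `halfCross`. -/
def u (α : P3) : Fin 3 → ZMod 2 := ![α.a9, α.a8, α.a7]

/-- The vector `(α₁₂, α₁₁, α₁₀)`, in the order matching `halfCross`. -/
def t (α : P3) : Fin 3 → ZMod 2 := ![α.a12, α.a11, α.a10]

/-- The vector `(α₁₅, α₁₄, α₁₃)`, in the order matching the cross product. -/
def z (α : P3) : Fin 3 → ZMod 2 := ![α.a15, α.a14, α.a13]

theorem ext_vec {α β : P3} (hx : α.xInt = β.xInt) (hy : α.yInt = β.yInt) (hu : α.u = β.u)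
    (ht : α.t = β.t) (hz : α.z = β.z) (h16 : α.a16 = β.a16) (h17 : α.a17 = β.a17) : α = β := by
  cases α
  cases β
  simp_all [xInt, yInt, u, t, z]

theorem x_eq (α : P3) : α.x = ![r α.a1, r α.a2, r α.a3] := by
  ext i
  fin_cases i <;> rfl

theorem y_eq (α : P3) : α.y = ![r α.a4, r α.a5, r α.a6] := by
  ext i
  fin_cases i <;> rfl

section Mul

variable (α β : P3)

theorem xInt_mul : (α * β).xInt = α.xInt + β.xInt := (vec3_add ..).symm

theorem yInt_mul : (α * β).yInt = α.yInt + β.yInt := (vec3_add ..).symm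

theorem x_mul : (α * β).x = α.x + β.x := by
  rw [x, xInt_mul, map_add, x, x]

theorem y_mul : (α * β).y = α.y + β.y := by
  rw [y, yInt_mul, map_add, y, y]

theorem u_mul : (α * β).u = α.u + β.u + halfCross α.x β.x := by
  simp only [mul_def, mul, x_eq, halfCross_apply, u, vec3_add, cons_val]

theorem t_mul : (α * β).t = α.t + β.t + halfCross α.y β.y := by
  simp only [mul_def, mul, y_eq, halfCross_apply, t, vec3_add, cons_val]

theorem z_mul : (α * β).z = α.z + β.z + α.y ⨯₃ β.x := by
  simp only [mul_def, mul, x_eq, y_eq, cross_apply_of_charTwo, z, vec3_add, cons_val,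
    ← add_assoc]

theorem a16_mul : (α * β).a16 =
    α.a16 + β.a16 + α.z ⬝ᵥ β.x + α.y ⬝ᵥ halfCross β.x β.x := by
  simp only [mul_def, mul, x_eq, y_eq, halfCross_apply, z, vec3_dotProduct, cons_val]
  ring

theorem a17_mul : (α * β).a17 =
    α.a17 + β.a17 + α.z ⬝ᵥ β.y + halfCross α.y α.y ⬝ᵥ β.x + α.y ⬝ᵥ β.x ⨯₃ β.y := by
  simp only [mul_def, mul, x_eq, y_eq, halfCross_apply, cross_apply_of_charTwo, z,
    vec3_dotProduct, cons_val]
  ring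

end Mul

theorem xInt_one : (1 : P3).xInt = 0 := by decide

theorem yInt_one : (1 : P3).yInt = 0 := by decide

theorem x_one : (1 : P3).x = 0 := by
  rw [x, xInt_one, map_zero]

theorem y_one : (1 : P3).y = 0 := by
  rw [y, yInt_one, map_zero]

theorem u_one : (1 : P3).u = 0 := by decide

theorem t_one : (1 : P3).t = 0 := by decide

theorem z_one : (1 : P3).z = 0 := by decide

theorem a16_one : (1 : P3).a16 = 0 := rfl

theorem a17_one : (1 : P3).a17 = 0 := rfl

section Inv

variable (α : P3)

theorem xInt_inv : α⁻¹.xInt = -α.xInt := by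
  simp only [inv_def, inv, xInt, neg_cons, neg_empty]

theorem yInt_inv : α⁻¹.yInt = -α.yInt := by
  simp only [inv_def, inv, yInt, neg_cons, neg_empty]

theorem x_inv : α⁻¹.x = α.x := by
  rw [x, xInt_inv, map_neg, CharTwo.neg_eq, x]

theorem y_inv : α⁻¹.y = α.y := by
  rw [y, yInt_inv, map_neg, CharTwo.neg_eq, y]

theorem u_inv : α⁻¹.u = α.u + halfCross α.x α.x := by
  simp only [inv_def, inv, x_eq, halfCross_apply, u, vec3_add, cons_val]
  apply vec3_eq <;> ring

theorem t_inv : α⁻¹.t = α.t + halfCross α.y α.y := by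
  simp only [inv_def, inv, y_eq, halfCross_apply, t, vec3_add, cons_val]
  apply vec3_eq <;> ring

theorem z_inv : α⁻¹.z = α.z + α.y ⨯₃ α.x := by
  simp only [inv_def, inv, x_eq, y_eq, cross_apply_of_charTwo, z, vec3_add, cons_val]
  apply vec3_eq <;> ring

theorem a16_inv : α⁻¹.a16 = α.a16 + α.z ⬝ᵥ α.x + α.y ⬝ᵥ halfCross α.x α.x := by
  simp only [inv_def, inv, x_eq, y_eq, halfCross_apply, z, vec3_dotProduct, cons_val]
  ring

theorem a17_inv : α⁻¹.a17 =
    α.a17 + α.z ⬝ᵥ α.y + halfCross α.y α.y ⬝ᵥ α.x + α.y ⬝ᵥ α.x ⨯₃ α.y := by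
  simp only [inv_def, inv, x_eq, y_eq, halfCross_apply, cross_apply_of_charTwo, z,
    vec3_dotProduct, cons_val]
  ring

end Inv

protected theorem one_mul (α : P3) : 1 * α = α := by
  apply ext_vec <;>
    simp only [xInt_mul, yInt_mul, u_mul, t_mul, z_mul, a16_mul, a17_mul, xInt_one, yInt_one,
      x_one, y_one, u_one, t_one, z_one, a16_one, a17_one, map_zero, LinearMap.zero_apply,
      zero_dotProduct, zero_add, add_zero]

theorem a16_mul_assoc (α β γ : P3) : (α * β * γ).a16 = (α * (β * γ)).a16 := by
  have triple : α.y ⨯₃ β.x ⬝ᵥ γ.x = α.y ⬝ᵥ β.x ⨯₃ γ.x := cross_dot_eq_dot_cross ..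
  simp only [a16_mul, z_mul, x_mul, y_mul, halfCross_add_self, dotProduct_add, add_dotProduct,
    triple]
  abel

theorem a17_mul_assoc (α β γ : P3) : (α * β * γ).a17 = (α * (β * γ)).a17 := by
  have triple_xy : α.y ⨯₃ β.x ⬝ᵥ γ.y = α.y ⬝ᵥ β.x ⨯₃ γ.y := cross_dot_eq_dot_cross ..
  have triple_yx : α.y ⨯₃ β.y ⬝ᵥ γ.x = α.y ⬝ᵥ γ.x ⨯₃ β.y := by
    rw [cross_dot_eq_dot_cross, cross_comm_of_charTwo]
  simp only [a17_mul, z_mul, x_mul, y_mul, halfCross_add_self]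
  simp only [map_add, LinearMap.add_apply, dotProduct_add, add_dotProduct, triple_xy, triple_yx]
  abel

protected theorem mul_assoc (α β γ : P3) : α * β * γ = α * (β * γ) := by
  refine ext_vec ?_ ?_ ?_ ?_ ?_ (a16_mul_assoc α β γ) (a17_mul_assoc α β γ) <;>
    simp only [xInt_mul, yInt_mul, u_mul, t_mul, z_mul, x_mul, y_mul, map_add,
      LinearMap.add_apply] <;>
    abel

theorem a16_inv_mul_cancel (α : P3) : (α⁻¹ * α).a16 = 0 := by
  have triple : α.y ⨯₃ α.x ⬝ᵥ α.x = 0 := by rw [dotProduct_comm, dot_cross_self]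
  simp only [a16_mul, a16_inv, z_inv, y_inv, add_dotProduct, triple]
  grind

theorem a17_inv_mul_cancel (α : P3) : (α⁻¹ * α).a17 = 0 := by
  have triple : α.y ⨯₃ α.x ⬝ᵥ α.y = 0 := by rw [dotProduct_comm, dot_self_cross]
  simp only [a17_mul, a17_inv, z_inv, y_inv, add_dotProduct, triple]
  grind

protected theorem inv_mul_cancel (α : P3) : α⁻¹ * α = 1 := by
  apply ext_vec
  · rw [xInt_mul, xInt_inv, neg_add_cancel, xInt_one]
  · rw [yInt_mul, yInt_inv, neg_add_cancel, yInt_one]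
  · rw [u_mul, u_inv, x_inv, add_right_comm, CharTwo.add_cancel_right, CharTwo.add_self_eq_zero,
      u_one]
  · rw [t_mul, t_inv, y_inv, add_right_comm, CharTwo.add_cancel_right, CharTwo.add_self_eq_zero,
      t_one]
  · rw [z_mul, z_inv, y_inv, add_right_comm, CharTwo.add_cancel_right, CharTwo.add_self_eq_zero,
      z_one]
  · exact a16_inv_mul_cancel α
  · exact a17_inv_mul_cancel α

instance : Group P3 := Group.ofLeftAxioms P3.mul_assoc P3.one_mul P3.inv_mul_cancel

end P3

/-- the zero tuple is a two-sided identity for the explicit multiplication on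
`P₃`, the explicitly given tuple `P3.inv α` is a two-sided inverse of `α`, and hence `P₃`
with this multiplication is a group. -/
theorem P3_group :
    (∀ α : P3, P3.mul P3.zero α = α ∧ P3.mul α P3.zero = α) ∧
    (∀ α : P3, P3.mul α (P3.inv α) = P3.zero ∧ P3.mul (P3.inv α) α = P3.zero) ∧
    (∃ inst : Group P3, (∀ a b : P3, inst.mul a b = P3.mul a b) ∧ inst.one = P3.zero ∧
      ∀ a : P3, inst.inv a = P3.inv a) :=
  ⟨fun α => ⟨one_mul α, mul_one α⟩, fun α => ⟨mul_inv_cancel α, inv_mul_cancel α⟩,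
    inferInstance, fun _ _ => rfl, rfl, fun _ => rfl⟩
end

section
/- For every n ≥ 3, the multiplication defined on Pₙ = ℤ²ⁿ × 𝔽₂ᵐ by the explicit coordinate formulas is associative, the zero tuple is a two-sided identity, and every element has a two-sided inverse; hence Pₙ is a group. -/
/-- `Pₙ = ℤ²ⁿ × 𝔽₂ᵐ`, `m = 3·C(n,2) + 2·C(n,3)`: integer coordinates `lin l` for
`l = 1,…,2n`, and `𝔽₂`-coordinates `q1 i j`, `q2 i j`, `q3 i j` for `i < j` and
`c1 i j k`, `c2 i j k` for `i < j < k`. -/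
structure Pn (n : ℕ) where
  lin : Fin (2 * n) → ℤ
  q1 : (i j : Fin n) → i < j → ZMod 2
  q2 : (i j : Fin n) → i < j → ZMod 2
  q3 : (i j : Fin n) → i < j → ZMod 2
  c1 : (i j k : Fin n) → i < j → j < k → ZMod 2
  c2 : (i j k : Fin n) → i < j → j < k → ZMod 2

namespace Pn

variable {n : ℕ}

/-- Reduction of an integer coordinate modulo 2. -/
def r (x : ℤ) : ZMod 2 := (x : ZMod 2)

/-- The index `i` among the first `n` integer coordinates. -/
def lo (i : Fin n) : Fin (2 * n) := ⟨i.1, by have := i.2; omega⟩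

/-- The index `i + n` among the last `n` integer coordinates. -/
def hi (i : Fin n) : Fin (2 * n) := ⟨i.1 + n, by have := i.2; omega⟩

/-- The explicit multiplication on `Pₙ`. -/
def mul (α β : Pn n) : Pn n where
  lin := fun l => α.lin l + β.lin l
  q1 := fun i j h => α.q1 i j h + β.q1 i j h + r (α.lin (lo j)) * r (β.lin (lo i))
  q2 := fun i j h => α.q2 i j h + β.q2 i j h + r (α.lin (hi j)) * r (β.lin (hi i))
  q3 := fun i j h => α.q3 i j h + β.q3 i j h
    + r (α.lin (hi i)) * r (β.lin (lo j)) + r (α.lin (hi j)) * r (β.lin (lo i))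
  c1 := fun i j k hij hjk => α.c1 i j k hij hjk + β.c1 i j k hij hjk
    + α.q3 i j hij * r (β.lin (lo k)) + α.q3 i k (hij.trans hjk) * r (β.lin (lo j))
    + α.q3 j k hjk * r (β.lin (lo i))
    + r (α.lin (hi i)) * r (β.lin (lo j)) * r (β.lin (lo k))
    + r (α.lin (hi j)) * r (β.lin (lo i)) * r (β.lin (lo k))
    + r (α.lin (hi k)) * r (β.lin (lo i)) * r (β.lin (lo j))
  c2 := fun i j k hij hjk => α.c2 i j k hij hjk + β.c2 i j k hij hjk
    + α.q3 i j hij * r (β.lin (hi k)) + α.q3 i k (hij.trans hjk) * r (β.lin (hi j))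
    + α.q3 j k hjk * r (β.lin (hi i))
    + r (α.lin (hi i)) * r (α.lin (hi j)) * r (β.lin (lo k))
    + r (α.lin (hi i)) * r (α.lin (hi k)) * r (β.lin (lo j))
    + r (α.lin (hi j)) * r (α.lin (hi k)) * r (β.lin (lo i))
    + r (α.lin (hi i)) * (r (β.lin (lo j)) * r (β.lin (hi k)) + r (β.lin (hi j)) * r (β.lin (lo k)))
    + r (α.lin (hi j)) * (r (β.lin (lo i)) * r (β.lin (hi k)) + r (β.lin (hi i)) * r (β.lin (lo k)))
    + r (α.lin (hi k)) * (r (β.lin (lo i)) * r (β.lin (hi j)) + r (β.lin (hi i)) * r (β.lin (lo j)))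

/-- The zero tuple of `Pₙ`. -/
def zero : Pn n :=
  ⟨fun _ => 0, fun _ _ _ => 0, fun _ _ _ => 0, fun _ _ _ => 0,
    fun _ _ _ _ _ => 0, fun _ _ _ _ _ => 0⟩

/-- The explicit inverse on `Pₙ`. -/
def inv (α : Pn n) : Pn n where
  lin := fun l => -α.lin l
  q1 := fun i j h => α.q1 i j h + r (α.lin (lo i)) * r (α.lin (lo j))
  q2 := fun i j h => α.q2 i j h + r (α.lin (hi i)) * r (α.lin (hi j))
  q3 := fun i j h => α.q3 i j h
    + r (α.lin (lo j)) * r (α.lin (hi i)) + r (α.lin (lo i)) * r (α.lin (hi j))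
  c1 := fun i j k hij hjk => α.c1 i j k hij hjk
    + α.q3 i j hij * r (α.lin (lo k)) + α.q3 i k (hij.trans hjk) * r (α.lin (lo j))
    + α.q3 j k hjk * r (α.lin (lo i))
    + r (α.lin (hi i)) * r (α.lin (lo j)) * r (α.lin (lo k))
    + r (α.lin (hi j)) * r (α.lin (lo i)) * r (α.lin (lo k))
    + r (α.lin (hi k)) * r (α.lin (lo i)) * r (α.lin (lo j))
  c2 := fun i j k hij hjk => α.c2 i j k hij hjk
    + α.q3 i j hij * r (α.lin (hi k)) + α.q3 i k (hij.trans hjk) * r (α.lin (hi j))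
    + α.q3 j k hjk * r (α.lin (hi i))
    + r (α.lin (hi i)) * r (α.lin (hi j)) * r (α.lin (lo k))
    + r (α.lin (hi i)) * r (α.lin (hi k)) * r (α.lin (lo j))
    + r (α.lin (hi j)) * r (α.lin (hi k)) * r (α.lin (lo i))
    + r (α.lin (hi i)) * (r (α.lin (lo j)) * r (α.lin (hi k)) + r (α.lin (hi j)) * r (α.lin (lo k)))
    + r (α.lin (hi j)) * (r (α.lin (lo i)) * r (α.lin (hi k)) + r (α.lin (hi i)) * r (α.lin (lo k)))
    + r (α.lin (hi k)) * (r (α.lin (lo i)) * r (α.lin (hi j)) + r (α.lin (hi i)) * r (α.lin (lo j)))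

instance : Mul (Pn n) := ⟨Pn.mul⟩
instance : One (Pn n) := ⟨Pn.zero⟩
instance : Inv (Pn n) := ⟨Pn.inv⟩

end Pn

/-!
Every coordinate `φ` of `αβ` has the form `φ α + φ β + f α β`, where the twist `f` is a polynomial
in other coordinates. Such a coordinate is compatible with associativity as soon as `f` is a
2-cocycle. Write `xᵢ`, `yᵢ` for the reductions of `αᵢ`, `αᵢ₊ₙ` modulo 2. The twists of the `αᵢⱼ`
are sums of cup products of these homomorphisms; in particular that of `αᵢⱼ³` is `yᵢ ∪ xⱼ + yⱼ ∪
xᵢ`. The twists of `αᵢⱼₖ¹` and `αᵢⱼₖ²` are Massey products: in their coboundaries, the triple cup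
products coming from `αᵢⱼ³` cancel against those coming from quadratic monomials `uv` in the `x`
and `y`, which fail to be additive by `(uv)(αβ) - (uv)(α) - (uv)(β) = u(α) v(β) + v(α) u(β)`.

All twists depend on `β` only through `x` and `y`, and these do not distinguish `α` from `α⁻¹`.
Hence the 𝔽₂-coordinates of the inverse are `-(φ α + f α α⁻¹) = φ α + f α α`.
-/

section TwistedHom

variable {M A : Type*} [Mul M]

/-- 2-cocycles with trivial coefficients. Unlike in `groupCohomology.IsCocycle₂`, no action is
given; the multiplication of `M` need not be associative, since associativity is to be deduced. -/
def IsTwoCocycle [Add A] (f : M → M → A) : Prop :=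
  ∀ a b c, f a b + f (a * b) c = f b c + f a (b * c)

theorem IsTwoCocycle.add [AddCommSemigroup A] {f g : M → M → A}
    (hf : IsTwoCocycle f) (hg : IsTwoCocycle g) : IsTwoCocycle fun a b => f a b + g a b := by
  intro a b c
  rw [add_add_add_comm, hf, hg, add_add_add_comm]

theorem isTwoCocycle_zero [Add A] [Zero A] : IsTwoCocycle fun _ _ : M => (0 : A) :=
  fun _ _ _ => rfl

theorem isTwoCocycle_cup [NonUnitalNonAssocSemiring A] {u v : M → A}
    (hu : ∀ a b, u (a * b) = u a + u b) (hv : ∀ a b, v (a * b) = v a + v b) :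
    IsTwoCocycle fun a b => u a * v b := by
  intro a b c
  simp only [hu, hv, add_mul, mul_add]
  abel

/-- The (matric) Massey product `p ∪ w + u ∪ s` of vector-valued cochains. It is meant for
homomorphisms `w` and `u` and cochains `p` and `s` such that the coboundaries of `p ∪ w` and
`u ∪ s` cancel. -/
def masseyProduct {ι κ : Type*} [Fintype ι] [Fintype κ] [Mul A] [AddCommMonoid A]
    (p w : M → ι → A) (u s : M → κ → A) (a b : M) : A :=
  p a ⬝ᵥ w b + u a ⬝ᵥ s b

theorem isTwoCocycle_masseyProduct {ι κ : Type*} [Fintype ι] [Fintype κ]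
    [NonUnitalNonAssocRing A] {p w : M → ι → A} {u s : M → κ → A}
    (hw : ∀ a b, w (a * b) = w a + w b) (hu : ∀ a b, u (a * b) = u a + u b)
    (h : ∀ a b c, (p (a * b) - p a - p b) ⬝ᵥ w c = u a ⬝ᵥ (s (b * c) - s b - s c)) :
    IsTwoCocycle (masseyProduct p w u s) := by
  intro a b c
  have hp : p (a * b) ⬝ᵥ w c = p a ⬝ᵥ w c + p b ⬝ᵥ w c + u a ⬝ᵥ (s (b * c) - s b - s c) := by
    rw [← h, sub_dotProduct, sub_dotProduct]; abel
  simp only [masseyProduct, hw, hu, hp, dotProduct_add, add_dotProduct, dotProduct_sub]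
  abel

/-- A coordinate `φ` which fails to be a homomorphism to `A` by the 2-cocycle `f`: the coordinate in
`A` of an extension with cocycle `f`. Here `1` and `⁻¹` are only candidates for the identity and the
inverse. -/
structure IsTwistedHom [One M] [Inv M] [AddCommGroup A] (φ : M → A) (f : M → M → A) : Prop where
  map_mul : ∀ a b, φ (a * b) = φ a + φ b + f a b
  map_one : φ 1 = 0
  map_inv : ∀ a, φ a⁻¹ = -(φ a + f a a⁻¹)
  twist_one : ∀ a, f a 1 = 0
  isTwoCocycle : IsTwoCocycle f

namespace IsTwistedHom

variable [One M] [Inv M] [AddCommGroup A] {φ : M → A} {f : M → M → A}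

theorem map_mul_assoc (h : IsTwistedHom φ f) (a b c : M) : φ (a * b * c) = φ (a * (b * c)) :=
  calc
    φ (a * b * c) = φ a + φ b + φ c + (f a b + f (a * b) c) := by
      rw [h.map_mul, h.map_mul]; abel
    _ = φ a + φ b + φ c + (f b c + f a (b * c)) := by rw [h.isTwoCocycle]
    _ = φ (a * (b * c)) := by rw [h.map_mul a, h.map_mul b]; abel

theorem map_mul_one (h : IsTwistedHom φ f) (a : M) : φ (a * 1) = φ a := by
  rw [h.map_mul, h.map_one, h.twist_one, add_zero, add_zero]

theorem map_mul_inv (h : IsTwistedHom φ f) (a : M) : φ (a * a⁻¹) = φ 1 := by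
  rw [h.map_mul, h.map_inv, h.map_one]; abel

end IsTwistedHom

end TwistedHom

section PairProducts

variable {R : Type*}

/-- The products `(v₁v₂, v₀v₂, v₀v₁)`, each at the position of the missing index. -/
def pairProd [Mul R] (v : Fin 3 → R) : Fin 3 → R := ![v 1 * v 2, v 0 * v 2, v 0 * v 1]

/-- The polarization of the quadratic map `pairProd`. -/
def mixedProd [Add R] [Mul R] (v w : Fin 3 → R) : Fin 3 → R :=
  ![v 1 * w 2 + v 2 * w 1, v 0 * w 2 + v 2 * w 0, v 0 * w 1 + v 1 * w 0]

theorem pairProd_add [CommSemiring R] (v w : Fin 3 → R) :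
    pairProd (v + w) = pairProd v + pairProd w + mixedProd v w := by
  simp only [pairProd, mixedProd, Matrix.vec3_add, Pi.add_apply, Matrix.vecCons_inj]
  exact ⟨by ring, by ring, by ring, trivial⟩

theorem mixedProd_add_add [CommSemiring R] (v w v' w' : Fin 3 → R) :
    mixedProd (v + v') (w + w') =
      mixedProd v w + mixedProd v' w' + (mixedProd v w' + mixedProd w v') := by
  simp only [mixedProd, Matrix.vec3_add, Pi.add_apply, Matrix.vecCons_inj]
  exact ⟨by ring, by ring, by ring, trivial⟩

theorem mixedProd_dotProduct [CommSemiring R] (u v w : Fin 3 → R) :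
    mixedProd u v ⬝ᵥ w = u ⬝ᵥ mixedProd v w := by
  simp only [mixedProd, dotProduct, Fin.sum_univ_three, Matrix.cons_val]
  ring

end PairProducts

namespace Pn

attribute [ext] Pn

section Coordinates

variable {n : ℕ}

/-- The integer coordinate `αᵢ` modulo 2, for `i ≤ n`. -/
def x (i : Fin n) (α : Pn n) : ZMod 2 := r (α.lin (lo i))

/-- The integer coordinate `αᵢ₊ₙ` modulo 2, for `i ≤ n`. -/
def y (i : Fin n) (α : Pn n) : ZMod 2 := r (α.lin (hi i))

theorem x_mul (i : Fin n) (α β : Pn n) : x i (α * β) = x i α + x i β := Int.cast_add _ _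

theorem y_mul (i : Fin n) (α β : Pn n) : y i (α * β) = y i α + y i β := Int.cast_add _ _

theorem x_one (i : Fin n) : x i 1 = 0 := Int.cast_zero

theorem y_one (i : Fin n) : y i 1 = 0 := Int.cast_zero

theorem x_inv (i : Fin n) (α : Pn n) : x i α⁻¹ = x i α :=
  (Int.cast_neg _).trans (CharTwo.neg_eq _)

theorem y_inv (i : Fin n) (α : Pn n) : y i α⁻¹ = y i α :=
  (Int.cast_neg _).trans (CharTwo.neg_eq _)

theorem q3_mul (i j : Fin n) (hij : i < j) (α β : Pn n) :
    (α * β).q3 i j hij = α.q3 i j hij + β.q3 i j hij + (y i α * x j β + y j α * x i β) :=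
  add_assoc _ _ _

/-- The vector `(xᵢ, xⱼ, xₖ)`. -/
def xVec (i j k : Fin n) (α : Pn n) : Fin 3 → ZMod 2 := ![x i α, x j α, x k α]

/-- The vector `(yᵢ, yⱼ, yₖ)`. -/
def yVec (i j k : Fin n) (α : Pn n) : Fin 3 → ZMod 2 := ![y i α, y j α, y k α]

/-- The vector `(αⱼₖ³, αᵢₖ³, αᵢⱼ³)`, each entry standing at the position of the missing index. -/
def qVec (i j k : Fin n) (hij : i < j) (hjk : j < k) (α : Pn n) : Fin 3 → ZMod 2 :=
  ![α.q3 j k hjk, α.q3 i k (hij.trans hjk), α.q3 i j hij]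

theorem xVec_mul (i j k : Fin n) (α β : Pn n) :
    xVec i j k (α * β) = xVec i j k α + xVec i j k β := by
  simp only [xVec, x_mul, Matrix.vec3_add]

theorem yVec_mul (i j k : Fin n) (α β : Pn n) :
    yVec i j k (α * β) = yVec i j k α + yVec i j k β := by
  simp only [yVec, y_mul, Matrix.vec3_add]

theorem qVec_mul (i j k : Fin n) (hij : i < j) (hjk : j < k) (α β : Pn n) :
    qVec i j k hij hjk (α * β) =
      qVec i j k hij hjk α + qVec i j k hij hjk β + mixedProd (yVec i j k α) (xVec i j k β) := by
  funext t
  fin_cases t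
  exacts [q3_mul j k hjk α β, q3_mul i k (hij.trans hjk) α β, q3_mul i j hij α β]

/-- The twist of the coordinate `αᵢⱼₖ¹`. -/
def c1Twist (i j k : Fin n) (hij : i < j) (hjk : j < k) : Pn n → Pn n → ZMod 2 :=
  masseyProduct (qVec i j k hij hjk) (xVec i j k) (yVec i j k) fun α => pairProd (xVec i j k α)

/-- The twist of the coordinate `αᵢⱼₖ²`. -/
def c2Twist (i j k : Fin n) (hij : i < j) (hjk : j < k) : Pn n → Pn n → ZMod 2 :=
  masseyProduct (fun α => Sum.elim (qVec i j k hij hjk α) (pairProd (yVec i j k α)))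
    (fun α => Sum.elim (yVec i j k α) (xVec i j k α))
    (yVec i j k) fun α => mixedProd (xVec i j k α) (yVec i j k α)

theorem c1Twist_apply (i j k : Fin n) (hij : i < j) (hjk : j < k) (α β : Pn n) :
    c1Twist i j k hij hjk α β =
      α.q3 i j hij * x k β + α.q3 i k (hij.trans hjk) * x j β + α.q3 j k hjk * x i β
      + y i α * x j β * x k β + y j α * x i β * x k β + y k α * x i β * x j β := by
  simp only [c1Twist, masseyProduct, qVec, xVec, yVec, pairProd, Matrix.vec3_dotProduct,
    Matrix.cons_val]
  ring

theorem c2Twist_apply (i j k : Fin n) (hij : i < j) (hjk : j < k) (α β : Pn n) :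
    c2Twist i j k hij hjk α β =
      α.q3 i j hij * y k β + α.q3 i k (hij.trans hjk) * y j β + α.q3 j k hjk * y i β
      + y i α * y j α * x k β + y i α * y k α * x j β + y j α * y k α * x i β
      + y i α * (x j β * y k β + y j β * x k β) + y j α * (x i β * y k β + y i β * x k β)
      + y k α * (x i β * y j β + y i β * x j β) := by
  simp only [c2Twist, masseyProduct, sumElim_dotProduct_sumElim, qVec, xVec, yVec, pairProd,
    mixedProd, Matrix.vec3_dotProduct, Matrix.cons_val]
  ring

theorem isTwoCocycle_c1Twist (i j k : Fin n) (hij : i < j) (hjk : j < k) :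
    IsTwoCocycle (c1Twist i j k hij hjk) := by
  refine isTwoCocycle_masseyProduct (xVec_mul i j k) (yVec_mul i j k) fun α β γ => ?_
  rw [qVec_mul, xVec_mul, pairProd_add, sub_sub, sub_sub, add_sub_cancel_left, add_sub_cancel_left,
    mixedProd_dotProduct]

theorem isTwoCocycle_c2Twist (i j k : Fin n) (hij : i < j) (hjk : j < k) :
    IsTwoCocycle (c2Twist i j k hij hjk) := by
  refine isTwoCocycle_masseyProduct (fun α β => ?_) (yVec_mul i j k) fun α β γ => ?_
  · rw [xVec_mul, yVec_mul, Sum.elim_add_add]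
  · rw [qVec_mul, yVec_mul, xVec_mul, yVec_mul, pairProd_add, mixedProd_add_add, Sum.elim_add_add,
      Sum.elim_add_add, sub_sub, sub_sub, add_sub_cancel_left, add_sub_cancel_left,
      sumElim_dotProduct_sumElim, mixedProd_dotProduct, mixedProd_dotProduct, dotProduct_add]

theorem isTwistedHom_lin (l : Fin (2 * n)) :
    IsTwistedHom (fun α : Pn n => α.lin l) fun _ _ => 0 where
  map_mul _ _ := (add_zero _).symm
  map_one := rfl
  map_inv α := congrArg Neg.neg (add_zero (α.lin l)).symm
  twist_one _ := rfl
  isTwoCocycle := isTwoCocycle_zero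

theorem isTwistedHom_q1 (i j : Fin n) (hij : i < j) :
    IsTwistedHom (fun α : Pn n => α.q1 i j hij) fun α β => x j α * x i β where
  map_mul _ _ := rfl
  map_one := rfl
  map_inv α := by
    rw [CharTwo.neg_eq, x_inv, mul_comm]; rfl
  twist_one _ := by rw [x_one, mul_zero]
  isTwoCocycle := isTwoCocycle_cup (x_mul j) (x_mul i)

theorem isTwistedHom_q2 (i j : Fin n) (hij : i < j) :
    IsTwistedHom (fun α : Pn n => α.q2 i j hij) fun α β => y j α * y i β where
  map_mul _ _ := rfl
  map_one := rfl
  map_inv α := by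
    rw [CharTwo.neg_eq, y_inv, mul_comm]; rfl
  twist_one _ := by rw [y_one, mul_zero]
  isTwoCocycle := isTwoCocycle_cup (y_mul j) (y_mul i)

theorem isTwistedHom_q3 (i j : Fin n) (hij : i < j) :
    IsTwistedHom (fun α : Pn n => α.q3 i j hij) fun α β => y i α * x j β + y j α * x i β where
  map_mul := q3_mul i j hij
  map_one := rfl
  map_inv α := by
    rw [CharTwo.neg_eq, x_inv, x_inv, mul_comm (y i α), mul_comm (y j α), ← add_assoc]; rfl
  twist_one _ := by rw [x_one, x_one, mul_zero, mul_zero, add_zero]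
  isTwoCocycle := (isTwoCocycle_cup (y_mul i) (x_mul j)).add (isTwoCocycle_cup (y_mul j) (x_mul i))

theorem isTwistedHom_c1 (i j k : Fin n) (hij : i < j) (hjk : j < k) :
    IsTwistedHom (fun α : Pn n => α.c1 i j k hij hjk) (c1Twist i j k hij hjk) where
  map_mul α β := by
    rw [c1Twist_apply]; simp only [← add_assoc]; rfl
  map_one := rfl
  map_inv α := by
    rw [CharTwo.neg_eq, c1Twist_apply]; simp only [x_inv, ← add_assoc]; rfl
  twist_one _ := by simp only [c1Twist_apply, x_one, mul_zero, add_zero]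
  isTwoCocycle := isTwoCocycle_c1Twist i j k hij hjk

theorem isTwistedHom_c2 (i j k : Fin n) (hij : i < j) (hjk : j < k) :
    IsTwistedHom (fun α : Pn n => α.c2 i j k hij hjk) (c2Twist i j k hij hjk) where
  map_mul α β := by
    rw [c2Twist_apply]; simp only [← add_assoc]; rfl
  map_one := rfl
  map_inv α := by
    rw [CharTwo.neg_eq, c2Twist_apply]; simp only [x_inv, y_inv, ← add_assoc]; rfl
  twist_one _ := by simp only [c2Twist_apply, x_one, y_one, mul_zero, add_zero]
  isTwoCocycle := isTwoCocycle_c2Twist i j k hij hjk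

end Coordinates

theorem eq_of_forall_isTwistedHom {n : ℕ} {α β : Pn n}
    (h : ∀ {A : Type} [AddCommGroup A] {φ : Pn n → A} {f : Pn n → Pn n → A},
      IsTwistedHom φ f → φ α = φ β) : α = β := by
  ext
  · exact h (isTwistedHom_lin _)
  · exact h (isTwistedHom_q1 _ _ _)
  · exact h (isTwistedHom_q2 _ _ _)
  · exact h (isTwistedHom_q3 _ _ _)
  · exact h (isTwistedHom_c1 _ _ _ _ _)
  · exact h (isTwistedHom_c2 _ _ _ _ _)

instance {n : ℕ} : Group (Pn n) :=
  Group.ofRightAxioms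
    (fun α β γ => eq_of_forall_isTwistedHom fun h => h.map_mul_assoc α β γ)
    (fun α => eq_of_forall_isTwistedHom fun h => h.map_mul_one α)
    (fun α => eq_of_forall_isTwistedHom fun h => h.map_mul_inv α)

end Pn

/-- for every `n ≥ 3`, the explicit multiplication on `Pₙ = ℤ²ⁿ × 𝔽₂ᵐ` is
associative, the zero tuple is a two-sided identity, and every element has a two-sided
inverse; hence `Pₙ` is a group. -/
theorem Pn_group (n : ℕ) (hn : 3 ≤ n) :
    (∀ a b c : Pn n, (a * b) * c = a * (b * c)) ∧
    (∀ a : Pn n, 1 * a = a ∧ a * 1 = a) ∧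
    (∀ a : Pn n, ∃ b : Pn n, a * b = 1 ∧ b * a = 1) ∧
    (∃ inst : Group (Pn n), (∀ a b : Pn n, inst.mul a b = a * b) ∧ inst.one = (1 : Pn n)) :=
  ⟨mul_assoc, fun a => ⟨one_mul a, mul_one a⟩,
    fun a => ⟨a⁻¹, mul_inv_cancel a, inv_mul_cancel a⟩, inferInstance, fun _ _ => rfl, rfl⟩
end

section
/- The map σ : P₃ → P₃ is a group automorphism of P₃ (σ(ᾱ·β̄) = σ(ᾱ)·σ(β̄) for all ᾱ,β̄, and σ is bijective) and has order 2, i.e. σ∘σ = id and σ ≠ id. -/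
/-!
Modulo 2, write `x = (α₁, α₂, α₃)`, `y = (α₄, α₅, α₆)` and `z = (α₁₅, α₁₄, α₁₃)`. The formulas for
the coordinates 13 to 17 of the product and of `σ` are polynomial expressions in these vectors
built from the quadratic adjoint `x♯ = (x₂x₃, x₁x₃, x₁x₂)` and its polarization
`x × y = (x + y)♯ - x♯ - y♯`, and `σ` exchanges `x` with `y` and `α₁₆` with `α₁₇` up to such terms.
Since `u ⬝ (v × w)` is a symmetric trilinear form, all terms that do not match in `σ(αβ)` and
`σ(α)σ(β)`, or in `σ(σ(α))` and `α`, occur twice, and they vanish in characteristic 2.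
-/

section Sharp

open Matrix

variable {R : Type*} [CommSemiring R]

/-- The quadratic adjoint `u♯` of the cubic form `u₀u₁u₂` on `R³`, i.e. its gradient. -/
def sharp (u : Fin 3 → R) : Fin 3 → R :=
  ![u 1 * u 2, u 0 * u 2, u 0 * u 1]

/-- The polarization of `sharp`: the symmetric product `u × v` (no signs, unlike `crossProduct`). -/
def sharpPolar (u v : Fin 3 → R) : Fin 3 → R :=
  ![u 1 * v 2 + u 2 * v 1, u 0 * v 2 + u 2 * v 0, u 0 * v 1 + u 1 * v 0]

theorem sharp_add (u v : Fin 3 → R) : sharp (u + v) = sharp u + sharpPolar u v + sharp v := by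
  ext i
  fin_cases i <;>
    simp only [sharp, sharpPolar, Pi.add_apply, Fin.zero_eta, Fin.mk_one, Fin.reduceFinMk,
      cons_val] <;>
    ring

theorem sharpPolar_comm (u v : Fin 3 → R) : sharpPolar u v = sharpPolar v u := by
  simp only [sharpPolar, mul_comm, add_comm]

theorem sharpPolar_add_left (u v w : Fin 3 → R) :
    sharpPolar (u + v) w = sharpPolar u w + sharpPolar v w := by
  ext i
  fin_cases i <;>
    simp only [sharpPolar, Pi.add_apply, Fin.zero_eta, Fin.mk_one, Fin.reduceFinMk, cons_val] <;>
    ring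

theorem sharpPolar_add_right (u v w : Fin 3 → R) :
    sharpPolar u (v + w) = sharpPolar u v + sharpPolar u w := by
  simp only [sharpPolar_comm u, sharpPolar_add_left]

theorem dotProduct_sharpPolar (u v w : Fin 3 → R) :
    u ⬝ᵥ sharpPolar v w = sharpPolar u v ⬝ᵥ w := by
  simp only [sharpPolar, dotProduct, Fin.sum_univ_three, cons_val]
  ring

theorem dotProduct_sharpPolar_left_comm (u v w : Fin 3 → R) :
    u ⬝ᵥ sharpPolar v w = v ⬝ᵥ sharpPolar u w := by
  rw [dotProduct_sharpPolar, sharpPolar_comm, ← dotProduct_sharpPolar]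

end Sharp

namespace P3

open Matrix

attribute [ext] P3

/-- The block `x = (α₁, α₂, α₃)` modulo 2. -/
def xVec (α : P3) : Fin 3 → ZMod 2 := ![r α.a1, r α.a2, r α.a3]

/-- The block `y = (α₄, α₅, α₆)` modulo 2. -/
def yVec (α : P3) : Fin 3 → ZMod 2 := ![r α.a4, r α.a5, r α.a6]

/-- The block `z = (α₁₅, α₁₄, α₁₃)`. The coordinates `α₁₃, α₁₄, α₁₅` belong to the pairs
`{1, 2}, {1, 3}, {2, 3}`; the reversed order indexes each by the complement of its pair. -/
def zVec (α : P3) : Fin 3 → ZMod 2 := ![α.a15, α.a14, α.a13]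

theorem zVec_inj {α β : P3} :
    zVec α = zVec β ↔ α.a13 = β.a13 ∧ α.a14 = β.a14 ∧ α.a15 = β.a15 := by
  simp only [zVec, vecCons_inj]
  tauto

theorem r_add (m n : ℤ) : r (m + n) = r m + r n :=
  Int.cast_add m n

section Mul

variable (α β : P3)

theorem xVec_mul : xVec (mul α β) = xVec α + xVec β := by
  simp [xVec, mul, r_add]

theorem yVec_mul : yVec (mul α β) = yVec α + yVec β := by
  simp [yVec, mul, r_add]

theorem zVec_mul : zVec (mul α β) = zVec α + zVec β + sharpPolar (yVec α) (xVec β) := by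
  ext i
  fin_cases i <;>
    simp only [zVec, yVec, xVec, mul, sharpPolar, Pi.add_apply, Fin.zero_eta, Fin.mk_one,
      Fin.reduceFinMk, cons_val] <;>
    ring

theorem a16_mul_s4 :
    (mul α β).a16 = α.a16 + β.a16 + zVec α ⬝ᵥ xVec β + yVec α ⬝ᵥ sharp (xVec β) := by
  simp only [mul, zVec, yVec, xVec, sharp, dotProduct, Fin.sum_univ_three, cons_val]
  ring

theorem a17_mul_s4 :
    (mul α β).a17 = α.a17 + β.a17 + zVec α ⬝ᵥ yVec β + xVec β ⬝ᵥ sharp (yVec α) +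
      yVec α ⬝ᵥ sharpPolar (xVec β) (yVec β) := by
  simp only [mul, zVec, yVec, xVec, sharp, sharpPolar, dotProduct, Fin.sum_univ_three, cons_val]
  ring

end Mul

section Sigma

variable (α β : P3)

theorem xVec_sigma : xVec (sigma α) = yVec α := rfl

theorem yVec_sigma : yVec (sigma α) = xVec α := rfl

theorem zVec_sigma : zVec (sigma α) = zVec α + sharpPolar (xVec α) (yVec α) := by
  simp [zVec, yVec, xVec, sigma, sharpPolar, add_assoc]

theorem a16_sigma : (sigma α).a16 = α.a17 + xVec α ⬝ᵥ sharp (yVec α) := by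
  simp only [sigma, yVec, xVec, sharp, dotProduct, Fin.sum_univ_three, cons_val]
  ring

theorem a17_sigma : (sigma α).a17 = α.a16 + yVec α ⬝ᵥ sharp (xVec α) := by
  simp only [sigma, yVec, xVec, sharp, dotProduct, Fin.sum_univ_three, cons_val]
  ring

theorem zVec_sigma_mul : zVec (sigma (mul α β)) = zVec (mul (sigma α) (sigma β)) := by
  simp only [zVec_sigma, zVec_mul, xVec_mul, yVec_mul, xVec_sigma, yVec_sigma,
    sharpPolar_add_left, sharpPolar_add_right, sharpPolar_comm (yVec α) (xVec β)]
  linear_combination CharTwo.add_self_eq_zero (sharpPolar (xVec β) (yVec α))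

theorem a16_sigma_mul : (sigma (mul α β)).a16 = (mul (sigma α) (sigma β)).a16 := by
  have hα : xVec α ⬝ᵥ sharpPolar (yVec α) (yVec β) = sharpPolar (xVec α) (yVec α) ⬝ᵥ yVec β :=
    dotProduct_sharpPolar _ _ _
  have hβ : yVec α ⬝ᵥ sharpPolar (xVec β) (yVec β) = xVec β ⬝ᵥ sharpPolar (yVec α) (yVec β) :=
    dotProduct_sharpPolar_left_comm _ _ _
  simp only [a16_sigma, a17_mul_s4, a16_mul_s4, xVec_mul, yVec_mul, zVec_sigma, xVec_sigma, yVec_sigma,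
    sharp_add, dotProduct_add, add_dotProduct]
  linear_combination hα + hβ + CharTwo.add_self_eq_zero (xVec β ⬝ᵥ sharp (yVec α)) +
    CharTwo.add_self_eq_zero (xVec β ⬝ᵥ sharpPolar (yVec α) (yVec β))

theorem a17_sigma_mul : (sigma (mul α β)).a17 = (mul (sigma α) (sigma β)).a17 := by
  have hα : yVec α ⬝ᵥ sharpPolar (xVec α) (xVec β) = sharpPolar (xVec α) (yVec α) ⬝ᵥ xVec β := by
    rw [dotProduct_sharpPolar, sharpPolar_comm]
  have hβ : yVec β ⬝ᵥ sharpPolar (xVec α) (xVec β) = xVec α ⬝ᵥ sharpPolar (yVec β) (xVec β) :=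
    dotProduct_sharpPolar_left_comm _ _ _
  simp only [a17_sigma, a16_mul_s4, a17_mul_s4, xVec_mul, yVec_mul, zVec_sigma, xVec_sigma, yVec_sigma,
    sharp_add, dotProduct_add, add_dotProduct]
  linear_combination hα + hβ + CharTwo.add_self_eq_zero (yVec α ⬝ᵥ sharp (xVec β))

theorem zVec_sigma_sigma : zVec (sigma (sigma α)) = zVec α := by
  rw [zVec_sigma, zVec_sigma, xVec_sigma, yVec_sigma, sharpPolar_comm (yVec α),
    CharTwo.add_cancel_right]

theorem a16_sigma_sigma : (sigma (sigma α)).a16 = α.a16 := by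
  rw [a16_sigma, a17_sigma, xVec_sigma, yVec_sigma, CharTwo.add_cancel_right]

theorem a17_sigma_sigma : (sigma (sigma α)).a17 = α.a17 := by
  rw [a17_sigma, a16_sigma, xVec_sigma, yVec_sigma, CharTwo.add_cancel_right]

theorem sigma_mul : sigma (mul α β) = mul (sigma α) (sigma β) := by
  obtain ⟨h13, h14, h15⟩ := zVec_inj.1 (zVec_sigma_mul α β)
  ext
  case a13 => exact h13
  case a14 => exact h14
  case a15 => exact h15
  case a16 => exact a16_sigma_mul α β
  case a17 => exact a17_sigma_mul α β
  all_goals rfl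

end Sigma

theorem sigma_involutive : Function.Involutive sigma := by
  intro α
  obtain ⟨h13, h14, h15⟩ := zVec_inj.1 (zVec_sigma_sigma α)
  ext
  case a13 => exact h13
  case a14 => exact h14
  case a15 => exact h15
  case a16 => exact a16_sigma_sigma α
  case a17 => exact a17_sigma_sigma α
  all_goals rfl

theorem sigma_ne_id : sigma ≠ id := fun h ↦
  zero_ne_one (α := ℤ) (congrArg a1 (congrFun h { zero with a1 := 1 }))

end P3

/-- `σ` is a group automorphism of `P₃` of order 2. -/
theorem P3_sigma_automorphism_order_two :
    (∀ α β : P3, P3.sigma (P3.mul α β) = P3.mul (P3.sigma α) (P3.sigma β)) ∧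
    Function.Bijective P3.sigma ∧
    P3.sigma ∘ P3.sigma = id ∧ P3.sigma ≠ id :=
  ⟨P3.sigma_mul, P3.sigma_involutive.bijective, P3.sigma_involutive.comp_self, P3.sigma_ne_id⟩
end

section
/- The map τ : P₃ → P₃ is a group automorphism of P₃ (τ(ᾱ·β̄) = τ(ᾱ)·τ(β̄) for all ᾱ,β̄, and τ is bijective) and has order 2, i.e. τ∘τ = id and τ ≠ id. -/
/-!
Modulo signs, which disappear in `𝔽₂`, `τ` acts on `a = (α₁, α₂, α₃)` and `b = (α₄, α₅, α₆)` as the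
shear `(a, b) ↦ (a + b, b)`. The product on each `𝔽₂`-coordinate is addition twisted by a cocycle.
Pulled back along `τ`, this cocycle becomes the sum of the cocycles of those coordinates that `τ`
adds up, plus the coboundary `q(α·β) - q(α) - q(β)` of a polynomial `q` in `a` and `b` (zero for
`α₁₀`, `α₁₁`, `α₁₂`, `α₁₇`). The correction terms in `τ` are exactly these `q`, so `τ` is
multiplicative.
-/

section Shear

variable {R : Type*} [CommRing R]

theorem shear_mixed_term (b₁ b₂ a₁' a₂' b₁' b₂' : R) :
    b₁ * (a₂' + b₂') + b₂ * (a₁' + b₁') =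
      b₁ * a₂' + b₂ * a₁' + ((b₁ + b₁') * (b₂ + b₂') - b₁ * b₂ - b₁' * b₂') := by
  ring

variable [CharP R 2]

theorem shear_cross_term (a₂ b₁ b₂ a₁' a₂' b₁' : R) :
    (a₂ + b₂) * (a₁' + b₁') =
      a₂ * a₁' + b₂ * b₁' + (b₁ * a₂' + b₂ * a₁') +
        ((a₂ + a₂') * (b₁ + b₁') - a₂ * b₁ - a₂' * b₁') := by
  linear_combination -(b₁ * a₂') * CharTwo.two_eq_zero (R := R)

-- For `u = α₇`, `v = α₁₀`, `w = α₁₃` the left-hand side is the seventh coordinate of `τ (τ α)`.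
theorem shear_correction_twice (a₂ b₁ b₂ u v w : R) :
    u + v + w + a₂ * b₁ + v + (w + b₁ * b₂) + (a₂ + b₂) * b₁ = u := by
  linear_combination (v + w + a₂ * b₁ + b₁ * b₂) * CharTwo.two_eq_zero (R := R)

end Shear

namespace P3

theorem r_add_s5 (x y : ℤ) : r (x + y) = r x + r y := Int.cast_add x y

theorem r_neg (x : ℤ) : r (-x) = r x := by
  rw [r, Int.cast_neg, CharTwo.neg_eq, r]

theorem r_sub (x y : ℤ) : r (x - y) = r x + r y := by
  rw [sub_eq_add_neg, r_add_s5, r_neg]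

/-- The 2-cocycle twisting the addition of the coordinate `α₁₆` in `P₃`. -/
def cocycle16 (α β : P3) : ZMod 2 :=
  α.a13 * r β.a3 + α.a14 * r β.a2 + α.a15 * r β.a1
    + r α.a4 * r β.a2 * r β.a3 + r α.a5 * r β.a1 * r β.a3 + r α.a6 * r β.a1 * r β.a2

/-- The 2-cocycle twisting the addition of the coordinate `α₁₇` in `P₃`. -/
def cocycle17 (α β : P3) : ZMod 2 :=
  α.a13 * r β.a6 + α.a14 * r β.a5 + α.a15 * r β.a4
    + r α.a4 * r α.a5 * r β.a3 + r α.a4 * r α.a6 * r β.a2 + r α.a5 * r α.a6 * r β.a1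
    + r α.a4 * (r β.a2 * r β.a6 + r β.a5 * r β.a3)
    + r α.a5 * (r β.a1 * r β.a6 + r β.a4 * r β.a3)
    + r α.a6 * (r β.a1 * r β.a5 + r β.a4 * r β.a2)

theorem mul_a16 (α β : P3) : (mul α β).a16 = α.a16 + β.a16 + cocycle16 α β := by
  simp only [mul, cocycle16]
  ring

theorem mul_a17 (α β : P3) : (mul α β).a17 = α.a17 + β.a17 + cocycle17 α β := by
  simp only [mul, cocycle17]
  ring

theorem cocycle16_tau (α β : P3) :
    cocycle16 (tau α) (tau β) =
      cocycle16 α β + cocycle17 α β +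
        ((r α.a4 + r β.a4) * (r α.a5 + r β.a5) * (r α.a6 + r β.a6)
          - r α.a4 * r α.a5 * r α.a6 - r β.a4 * r β.a5 * r β.a6) := by
  simp only [cocycle16, cocycle17, tau, r_sub, r_neg]
  ring

theorem cocycle17_tau (α β : P3) : cocycle17 (tau α) (tau β) = cocycle17 α β := by
  simp only [cocycle17, tau, r_sub, r_neg]
  linear_combination
    (r α.a4 * r α.a5 * r β.a6 + r α.a4 * r α.a6 * r β.a5 + r α.a5 * r α.a6 * r β.a4
      + r α.a4 * r β.a5 * r β.a6 + r α.a5 * r β.a4 * r β.a6 + r α.a6 * r β.a4 * r β.a5)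
      * CharTwo.two_eq_zero (R := ZMod 2)

theorem tau_mul_a16 (α β : P3) : (tau (mul α β)).a16 = (mul (tau α) (tau β)).a16 := by
  rw [mul_a16, cocycle16_tau]
  simp only [tau, mul_a16, mul_a17]
  simp only [mul, r_add_s5]
  ring

theorem tau_mul_a17 (α β : P3) : (tau (mul α β)).a17 = (mul (tau α) (tau β)).a17 := by
  rw [mul_a17, cocycle17_tau]
  exact mul_a17 α β

theorem tau_mul (α β : P3) : tau (mul α β) = mul (tau α) (tau β) := by
  ext
  case a16 => exact tau_mul_a16 α β
  case a17 => exact tau_mul_a17 α β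
  all_goals simp only [tau, mul, r_add_s5, r_sub, r_neg]
  case a1 | a2 | a3 => exact add_sub_add_comm ..
  case a4 | a5 | a6 => exact neg_add ..
  case a7 =>
    linear_combination -shear_cross_term (r α.a2) (r α.a4) (r α.a5)
      (r β.a1) (r β.a2) (r β.a4)
  case a8 =>
    linear_combination -shear_cross_term (r α.a3) (r α.a4) (r α.a6)
      (r β.a1) (r β.a3) (r β.a4)
  case a9 =>
    linear_combination -shear_cross_term (r α.a3) (r α.a5) (r α.a6)
      (r β.a2) (r β.a3) (r β.a5)
  case a13 =>
    linear_combination -shear_mixed_term (r α.a4) (r α.a5)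
      (r β.a1) (r β.a2) (r β.a4) (r β.a5)
  case a14 =>
    linear_combination -shear_mixed_term (r α.a4) (r α.a6)
      (r β.a1) (r β.a3) (r β.a4) (r β.a6)
  case a15 =>
    linear_combination -shear_mixed_term (r α.a5) (r α.a6)
      (r β.a2) (r β.a3) (r β.a5) (r β.a6)

theorem tau_involutive : Function.Involutive tau := by
  intro α
  ext
  all_goals simp only [tau, r_sub, r_neg]
  case a1 | a2 | a3 => ring
  case a4 | a5 | a6 => exact neg_neg _
  case a7 | a8 | a9 => exact shear_correction_twice ..
  case a13 | a14 | a15 => exact CharTwo.add_cancel_right ..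
  case a16 =>
    linear_combination (α.a17 + r α.a4 * r α.a5 * r α.a6) * CharTwo.two_eq_zero (R := ZMod 2)

theorem tau_ne_id : tau ≠ id := by
  intro h
  have neg_one_eq_one : (-1 : ℤ) = 1 := congrArg a4 (congrFun h { zero with a4 := 1 })
  exact absurd neg_one_eq_one (by decide)

end P3

/-- `τ` is a group automorphism of `P₃` of order 2. -/
theorem P3_tau_automorphism_order_two :
    (∀ α β : P3, P3.tau (P3.mul α β) = P3.mul (P3.tau α) (P3.tau β)) ∧
    Function.Bijective P3.tau ∧
    P3.tau ∘ P3.tau = id ∧ P3.tau ≠ id := by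
  exact ⟨P3.tau_mul, P3.tau_involutive.bijective, P3.tau_involutive.comp_self, P3.tau_ne_id⟩
end

section
/- For every n ≥ 3 and every triple α = (i,j,k) with 1 ≤ i < j < k ≤ n, the coordinate-restriction map π_α : Pₙ → P₃ defined by π_α(x̄) = (xᵢ, xⱼ, xₖ, x_{i+n}, x_{j+n}, x_{k+n}, xᵢⱼ¹, xᵢₖ¹, xⱼₖ¹, xᵢⱼ², xᵢₖ², xⱼₖ², xᵢⱼ³, xᵢₖ³, xⱼₖ³, xᵢⱼₖ¹, xᵢⱼₖ²) is a group homomorphism, and the induced map π : Pₙ → ∏_{α ∈ T} P₃ (product over T = {(i,j,k) : 1 ≤ i < j < k ≤ n}), whose α-component is π_α, is an injective group homomorphism. -/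
instance : Mul P3 := ⟨P3.mul⟩

/-- The index set `T = {(i,j,k) : 1 ≤ i < j < k ≤ n}`. -/
def TripleIdx (n : ℕ) := {t : Fin n × Fin n × Fin n // t.1 < t.2.1 ∧ t.2.1 < t.2.2}

/-- The coordinate-restriction map `π_α : Pₙ → P₃` for a triple `i < j < k`. -/
def projP3 {n : ℕ} (i j k : Fin n) (hij : i < j) (hjk : j < k) (x : Pn n) : P3 where
  a1 := x.lin (Pn.lo i)
  a2 := x.lin (Pn.lo j)
  a3 := x.lin (Pn.lo k)
  a4 := x.lin (Pn.hi i)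
  a5 := x.lin (Pn.hi j)
  a6 := x.lin (Pn.hi k)
  a7 := x.q1 i j hij
  a8 := x.q1 i k (hij.trans hjk)
  a9 := x.q1 j k hjk
  a10 := x.q2 i j hij
  a11 := x.q2 i k (hij.trans hjk)
  a12 := x.q2 j k hjk
  a13 := x.q3 i j hij
  a14 := x.q3 i k (hij.trans hjk)
  a15 := x.q3 j k hjk
  a16 := x.c1 i j k hij hjk
  a17 := x.c2 i j k hij hjk

/-- The induced map `π : Pₙ → ∏_{α ∈ T} P₃`, whose `α`-component is `π_α`. -/
def projAll {n : ℕ} (x : Pn n) : TripleIdx n → P3 :=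
  fun t => projP3 t.1.1 t.1.2.1 t.1.2.2 t.2.1 t.2.2 x

/-!
The multiplication formulas of `Pₙ` involve only indices from a single triple `i < j < k`, and on
such a triple they are the formulas of `P₃`, so each restriction is multiplicative by inspection.
For injectivity, when `n ≥ 3` every index and every pair `i < j` lies in some triple, so every
coordinate of `Pₙ` is seen by some restriction.
-/

section Triples

open Cardinal

variable {α : Type*} [LinearOrder α]

theorem forall_lt_of_forall_lt_lt (hα : 3 ≤ #α) {p : ∀ i j : α, i < j → Prop}
    (hp : ∀ i j k (hij : i < j) (hjk : j < k),
      p i j hij ∧ p i k (hij.trans hjk) ∧ p j k hjk)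
    (i j : α) (hij : i < j) : p i j hij := by
  obtain ⟨k, hki, hkj⟩ := exists_ne_ne_of_three_le hα i j
  rcases hki.lt_or_gt with hki | hik
  · exact (hp k i j hki hij).2.2
  rcases hkj.lt_or_gt with hkj | hjk
  · exact (hp i k j hik hkj).2.1
  · exact (hp i j k hij hjk).1

theorem forall_of_forall_lt_lt (hα : 3 ≤ #α) {p : α → Prop}
    (hp : ∀ i j k, i < j → j < k → p i ∧ p j ∧ p k) (i : α) : p i := by
  have hpair : ∀ i j, i < j → p i ∧ p j :=
    forall_lt_of_forall_lt_lt hα fun i j k hij hjk =>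
      have ⟨hi, hj, hk⟩ := hp i j k hij hjk
      ⟨⟨hi, hj⟩, ⟨hi, hk⟩, ⟨hj, hk⟩⟩
  obtain ⟨j, hji, -⟩ := exists_ne_ne_of_three_le hα i i
  rcases hji.lt_or_gt with hji | hij
  · exact (hpair j i hji).2
  · exact (hpair i j hij).1

end Triples

theorem Pn.forall_of_lo_of_hi {n : ℕ} {p : Fin (2 * n) → Prop} (hlo : ∀ i, p (Pn.lo i))
    (hhi : ∀ i, p (Pn.hi i)) (l : Fin (2 * n)) : p l := by
  rcases lt_or_ge l.1 n with hl | hl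
  · exact hlo ⟨l, hl⟩
  · have hl_eq : Pn.hi ⟨l - n, by omega⟩ = l := Fin.ext (Nat.sub_add_cancel hl)
    exact hl_eq ▸ hhi _

section Projections

variable {n : ℕ}

theorem projP3_mul {i j k : Fin n} (hij : i < j) (hjk : j < k) (a b : Pn n) :
    projP3 i j k hij hjk (a * b) = projP3 i j k hij hjk a * projP3 i j k hij hjk b :=
  rfl

theorem projAll_mul (a b : Pn n) : projAll (a * b) = projAll a * projAll b :=
  funext fun t => projP3_mul t.2.1 t.2.2 a b

theorem Pn.ext_of_projP3 (hn : 3 ≤ n) {a b : Pn n}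
    (hab : ∀ (i j k : Fin n) (hij : i < j) (hjk : j < k),
      projP3 i j k hij hjk a = projP3 i j k hij hjk b) : a = b := by
  have hcard : 3 ≤ Cardinal.mk (Fin n) := by
    rw [Cardinal.mk_fin]
    exact_mod_cast hn
  have hlo : ∀ i, a.lin (Pn.lo i) = b.lin (Pn.lo i) :=
    forall_of_forall_lt_lt hcard fun i j k hij hjk =>
      have h := hab i j k hij hjk
      ⟨congrArg P3.a1 h, congrArg P3.a2 h, congrArg P3.a3 h⟩
  have hhi : ∀ i, a.lin (Pn.hi i) = b.lin (Pn.hi i) :=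
    forall_of_forall_lt_lt hcard fun i j k hij hjk =>
      have h := hab i j k hij hjk
      ⟨congrArg P3.a4 h, congrArg P3.a5 h, congrArg P3.a6 h⟩
  have hq1 : ∀ i j hij, a.q1 i j hij = b.q1 i j hij :=
    forall_lt_of_forall_lt_lt hcard fun i j k hij hjk =>
      have h := hab i j k hij hjk
      ⟨congrArg P3.a7 h, congrArg P3.a8 h, congrArg P3.a9 h⟩
  have hq2 : ∀ i j hij, a.q2 i j hij = b.q2 i j hij :=
    forall_lt_of_forall_lt_lt hcard fun i j k hij hjk =>
      have h := hab i j k hij hjk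
      ⟨congrArg P3.a10 h, congrArg P3.a11 h, congrArg P3.a12 h⟩
  have hq3 : ∀ i j hij, a.q3 i j hij = b.q3 i j hij :=
    forall_lt_of_forall_lt_lt hcard fun i j k hij hjk =>
      have h := hab i j k hij hjk
      ⟨congrArg P3.a13 h, congrArg P3.a14 h, congrArg P3.a15 h⟩
  ext i j
  · exact Pn.forall_of_lo_of_hi (p := fun l => a.lin l = b.lin l) hlo hhi i
  · exact hq1 i j _
  · exact hq2 i j _
  · exact hq3 i j _
  · exact congrArg P3.a16 (hab i j _ _ _)
  · exact congrArg P3.a17 (hab i j _ _ _)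

theorem projAll_injective (hn : 3 ≤ n) : Function.Injective (projAll (n := n)) :=
  fun _ _ hab => Pn.ext_of_projP3 hn fun i j k hij hjk => congrFun hab ⟨(i, j, k), hij, hjk⟩

end Projections

/-- STATEMENT 9: each coordinate-restriction map `π_α : Pₙ → P₃` (for a triple
`i < j < k`) is a group homomorphism, and the induced map `π : Pₙ → ∏_{α ∈ T} P₃` is an
injective group homomorphism. -/
theorem Pn_embeds_in_product_of_P3 (n : ℕ) (hn : 3 ≤ n) :
    (∀ (i j k : Fin n) (hij : i < j) (hjk : j < k), ∀ a b : Pn n,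
      projP3 i j k hij hjk (a * b) = projP3 i j k hij hjk a * projP3 i j k hij hjk b) ∧
    (∀ a b : Pn n, projAll (a * b) = fun t => projAll a t * projAll b t) ∧
    Function.Injective (projAll (n := n)) :=
  ⟨fun _ _ _ hij hjk => projP3_mul hij hjk, projAll_mul, projAll_injective hn⟩
end

section
/- Let (G, σ, ρ) be a group with triality and M = {g⁻¹·σ(g) : g ∈ G}. Define m∘n = ρ(m)⁻¹ · n · ρ(ρ(m))⁻¹ for m, n ∈ M. Then: (a) M is closed under ∘ and 1 ∈ M; (b) (M, ∘) is a loop with identity 1, i.e. 1∘m = m∘1 = m for all m ∈ M, and for all a, b ∈ M each of the equations a∘x = b and y∘a = b has a unique solution x, y ∈ M; (c) ∘ satisfies the left Moufang identity ((a∘b)∘a)∘c = a∘(b∘(a∘c)) for all a, b, c ∈ M. Hence (M, ∘) is a Moufang loop. -/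
/-!
Write `m' = ρ m` and `m'' = ρ (ρ m)`. The set `M` is closed under inversion, so `m m' m'' = 1` can
be applied to `m⁻¹` as well, which gives `m'' m' m = 1`; hence `m = m'⁻¹ m''⁻¹ = m''⁻¹ m'⁻¹` for
`m ∈ M`. Applying this to a product in `M` yields a second formula `m ∘ n = n''⁻¹ m n'⁻¹`. Left
and right multiplications are therefore both two-sided translations of `G`, with inverses the
multiplications by `m⁻¹`, and `(a ∘ b) ∘ a = a b a`. As left multiplication by `a b a` is visibly
the composite of those by `a`, `b` and `a`, the left Moufang identity follows.
-/

section TwistedClass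

variable {G : Type*} [Group G] {σ : G →* G}

/-- The `σ`-twisted conjugacy class of `1`, i.e. the orbit of `1` under `m ↦ g⁻¹ * m * σ g`; for a
group with triality it carries the Moufang loop. -/
def twistedClassOne (σ : G →* G) : Set G := {m | ∃ g, m = g⁻¹ * σ g}

theorem one_mem_twistedClassOne : (1 : G) ∈ twistedClassOne σ :=
  ⟨1, by simp⟩

theorem inv_mul_mul_map_mem_twistedClassOne {m : G} (hm : m ∈ twistedClassOne σ) (g : G) :
    g⁻¹ * m * σ g ∈ twistedClassOne σ := by
  obtain ⟨k, rfl⟩ := hm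
  exact ⟨k * g, by simp [mul_assoc]⟩

theorem inv_mem_twistedClassOne (hσ : Function.Involutive σ) {m : G}
    (hm : m ∈ twistedClassOne σ) : m⁻¹ ∈ twistedClassOne σ := by
  obtain ⟨g, rfl⟩ := hm
  exact ⟨σ g, by simp [hσ g]⟩

theorem map_eq_inv_of_mem_twistedClassOne (hσ : Function.Involutive σ) {m : G}
    (hm : m ∈ twistedClassOne σ) : σ m = m⁻¹ := by
  obtain ⟨g, rfl⟩ := hm
  simp [hσ g]

end TwistedClass

section TrialityMul

variable {G : Type*} [Group G] {ρ : G →* G}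

/-- The product `m ∘ n = ρ(m)⁻¹ n ρ²(m)⁻¹`, defined on all of `G`; the Moufang loop of a group
with triality is its restriction to the twisted class of `1`. -/
def trialityMul (ρ : G →* G) (m n : G) : G := (ρ m)⁻¹ * n * (ρ (ρ m))⁻¹

theorem one_trialityMul (n : G) : trialityMul ρ 1 n = n := by
  simp [trialityMul]

theorem inv_trialityMul_cancel_left (m n : G) :
    trialityMul ρ m⁻¹ (trialityMul ρ m n) = n := by
  simp [trialityMul, mul_assoc]

theorem trialityMul_inv_cancel_left (m n : G) :
    trialityMul ρ m (trialityMul ρ m⁻¹ n) = n := by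
  simp [trialityMul, mul_assoc]

theorem mul_mul_trialityMul (a b c : G) :
    trialityMul ρ (a * b * a) c = trialityMul ρ a (trialityMul ρ b (trialityMul ρ a c)) := by
  simp [trialityMul, mul_assoc]

end TrialityMul

/-- `σ` and `ρ` make `G` a group with triality. They are taken to be endomorphisms, since the
relations `σ² = ρ³ = 1` make them bijective, and the triality identity is stated for the elements
`m = g⁻¹ * σ g`. -/
structure IsTriality {G : Type*} [Group G] (σ ρ : G →* G) : Prop where
  involutive : Function.Involutive σ
  map_map_map : ∀ g, ρ (ρ (ρ g)) = g
  involutive_comp : Function.Involutive (σ ∘ ρ)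
  mul_map_mul_map_map : ∀ m ∈ twistedClassOne σ, m * ρ m * ρ (ρ m) = 1

namespace IsTriality

variable {G : Type*} [Group G] {σ ρ : G →* G} {a b m n : G}

theorem map_map_eq_map_map_map (h : IsTriality σ ρ) (g : G) : σ (ρ g) = ρ (ρ (σ g)) := by
  have hconj : ρ (σ (ρ g)) = σ g := by
    simpa [h.involutive _] using congrArg σ (h.involutive_comp g)
  rw [← hconj, h.map_map_map]

theorem trialityMul_mem (h : IsTriality σ ρ) (hm : m ∈ twistedClassOne σ)
    (hn : n ∈ twistedClassOne σ) : trialityMul ρ m n ∈ twistedClassOne σ := by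
  have hσρ : σ (ρ m) = (ρ (ρ m))⁻¹ := by
    rw [h.map_map_eq_map_map_map, map_eq_inv_of_mem_twistedClassOne h.involutive hm, map_inv,
      map_inv]
  simpa only [trialityMul, hσρ] using inv_mul_mul_map_mem_twistedClassOne hn (ρ m)

theorem inv_map_map_mul_inv_map (h : IsTriality σ ρ) (hm : m ∈ twistedClassOne σ) :
    (ρ (ρ m))⁻¹ * (ρ m)⁻¹ = m := by
  rw [← mul_inv_rev]
  exact inv_eq_of_mul_eq_one_left (by simpa [mul_assoc] using h.mul_map_mul_map_map m hm)

theorem inv_map_mul_inv_map_map (h : IsTriality σ ρ) (hm : m ∈ twistedClassOne σ) :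
    (ρ m)⁻¹ * (ρ (ρ m))⁻¹ = m := by
  have hinv := h.inv_map_map_mul_inv_map (inv_mem_twistedClassOne h.involutive hm)
  rw [← mul_inv_rev, inv_eq_iff_eq_inv]
  simpa only [map_inv, inv_inv] using hinv

theorem trialityMul_one (h : IsTriality σ ρ) (hm : m ∈ twistedClassOne σ) :
    trialityMul ρ m 1 = m := by
  rw [trialityMul, mul_one, h.inv_map_mul_inv_map_map hm]

theorem trialityMul_eq_inv_mul_mul_inv (h : IsTriality σ ρ) (hm : m ∈ twistedClassOne σ)
    (hn : n ∈ twistedClassOne σ) :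
    trialityMul ρ m n = (ρ (ρ n))⁻¹ * m * (ρ n)⁻¹ := by
  have hm' : (ρ m)⁻¹ * (ρ (ρ m))⁻¹ = m := h.inv_map_mul_inv_map_map hm
  have hprod : m * ρ n * m⁻¹ * ρ (ρ n) * m = (ρ m)⁻¹ * n⁻¹ * (ρ (ρ m))⁻¹ := by
    have hmem := h.trialityMul_mem hm (inv_mem_twistedClassOne h.involutive hn)
    calc m * ρ n * m⁻¹ * ρ (ρ n) * m
        = m * ρ n * ((ρ m)⁻¹ * (ρ (ρ m))⁻¹)⁻¹ * ρ (ρ n) * m := by rw [hm']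
      _ = (ρ (trialityMul ρ m n⁻¹))⁻¹ * (ρ (ρ (trialityMul ρ m n⁻¹)))⁻¹ := by
        simp [trialityMul, h.map_map_map, mul_assoc]
      _ = (ρ m)⁻¹ * n⁻¹ * (ρ (ρ m))⁻¹ := h.inv_map_mul_inv_map_map hmem
  calc (ρ m)⁻¹ * n * (ρ (ρ m))⁻¹
      = ((ρ m)⁻¹ * (ρ (ρ m))⁻¹) * ((ρ m)⁻¹ * n⁻¹ * (ρ (ρ m))⁻¹)⁻¹ *
          ((ρ m)⁻¹ * (ρ (ρ m))⁻¹) := by group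
    _ = m * (m * ρ n * m⁻¹ * ρ (ρ n) * m)⁻¹ * m := by rw [hm', hprod]
    _ = (ρ (ρ n))⁻¹ * m * (ρ n)⁻¹ := by group

theorem trialityMul_inv_cancel_right (h : IsTriality σ ρ) (hm : m ∈ twistedClassOne σ)
    (hn : n ∈ twistedClassOne σ) : trialityMul ρ (trialityMul ρ m n) n⁻¹ = m := by
  rw [h.trialityMul_eq_inv_mul_mul_inv (h.trialityMul_mem hm hn)
      (inv_mem_twistedClassOne h.involutive hn),
    h.trialityMul_eq_inv_mul_mul_inv hm hn]
  simp [mul_assoc]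

theorem inv_trialityMul_cancel_right (h : IsTriality σ ρ) (hm : m ∈ twistedClassOne σ)
    (hn : n ∈ twistedClassOne σ) : trialityMul ρ (trialityMul ρ m n⁻¹) n = m := by
  simpa using h.trialityMul_inv_cancel_right hm (inv_mem_twistedClassOne h.involutive hn)

theorem existsUnique_trialityMul_left_eq (h : IsTriality σ ρ) (ha : a ∈ twistedClassOne σ)
    (hb : b ∈ twistedClassOne σ) :
    ∃! x, x ∈ twistedClassOne σ ∧ trialityMul ρ a x = b := by
  refine ⟨trialityMul ρ a⁻¹ b, ⟨?_, trialityMul_inv_cancel_left a b⟩, ?_⟩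
  · exact h.trialityMul_mem (inv_mem_twistedClassOne h.involutive ha) hb
  · rintro x ⟨-, rfl⟩
    exact (inv_trialityMul_cancel_left a x).symm

theorem existsUnique_trialityMul_right_eq (h : IsTriality σ ρ) (ha : a ∈ twistedClassOne σ)
    (hb : b ∈ twistedClassOne σ) :
    ∃! y, y ∈ twistedClassOne σ ∧ trialityMul ρ y a = b := by
  refine ⟨trialityMul ρ b a⁻¹, ⟨?_, h.inv_trialityMul_cancel_right hb ha⟩, ?_⟩
  · exact h.trialityMul_mem hb (inv_mem_twistedClassOne h.involutive ha)
  · rintro y ⟨hy, rfl⟩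
    exact (h.trialityMul_inv_cancel_right hy ha).symm

theorem trialityMul_trialityMul_self (h : IsTriality σ ρ) (ha : a ∈ twistedClassOne σ)
    (hb : b ∈ twistedClassOne σ) : trialityMul ρ (trialityMul ρ a b) a = a * b * a := by
  calc trialityMul ρ (trialityMul ρ a b) a
      = (ρ (ρ a))⁻¹ * ((ρ a)⁻¹ * b * (ρ (ρ a))⁻¹) * (ρ a)⁻¹ :=
        h.trialityMul_eq_inv_mul_mul_inv (h.trialityMul_mem ha hb) ha
    _ = ((ρ (ρ a))⁻¹ * (ρ a)⁻¹) * b * ((ρ (ρ a))⁻¹ * (ρ a)⁻¹) := by group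
    _ = a * b * a := by rw [h.inv_map_map_mul_inv_map ha]

theorem trialityMul_left_moufang (h : IsTriality σ ρ) (ha : a ∈ twistedClassOne σ)
    (hb : b ∈ twistedClassOne σ) (c : G) :
    trialityMul ρ (trialityMul ρ (trialityMul ρ a b) a) c =
      trialityMul ρ a (trialityMul ρ b (trialityMul ρ a c)) := by
  rw [h.trialityMul_trialityMul_self ha hb, mul_mul_trialityMul]

end IsTriality

/-- STATEMENT 15: let `(G, σ, ρ)` be a group with triality and `M = {g⁻¹·σ(g) : g ∈ G}`.
With `m ∘ n := ρ(m)⁻¹ · n · ρ(ρ(m))⁻¹`: (a) `M` is closed under `∘` and `1 ∈ M`;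
(b) `(M, ∘)` is a loop with identity `1`; (c) `∘` satisfies the left Moufang identity on
`M`. Hence `(M, ∘)` is a Moufang loop. -/
theorem moufang_loop_of_group_with_triality
    (G : Type*) [Group G] (σ ρ : G → G)
    (hσhom : ∀ a b : G, σ (a * b) = σ a * σ b) (hσbij : Function.Bijective σ)
    (hρhom : ∀ a b : G, ρ (a * b) = ρ a * ρ b) (hρbij : Function.Bijective ρ)
    (hσ2 : σ ∘ σ = id) (hρ3 : ρ ∘ ρ ∘ ρ = id) (hσρ2 : (σ ∘ ρ) ∘ (σ ∘ ρ) = id)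
    (htriality : ∀ g : G, (g⁻¹ * σ g) * ρ (g⁻¹ * σ g) * ρ (ρ (g⁻¹ * σ g)) = 1)
    (M : Set G) (hM : M = {m : G | ∃ g : G, m = g⁻¹ * σ g})
    (mul : G → G → G) (hmul : ∀ m n : G, mul m n = (ρ m)⁻¹ * n * (ρ (ρ m))⁻¹) :
    -- (a) closure and identity membership
    (∀ m ∈ M, ∀ n ∈ M, mul m n ∈ M) ∧ (1 : G) ∈ M ∧
    -- (b) loop structure: identity and unique solvability of equations
    (∀ m ∈ M, mul 1 m = m ∧ mul m 1 = m) ∧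
    (∀ a ∈ M, ∀ b ∈ M,
      (∃! x, x ∈ M ∧ mul a x = b) ∧ (∃! y, y ∈ M ∧ mul y a = b)) ∧
    -- (c) left Moufang identity
    (∀ a ∈ M, ∀ b ∈ M, ∀ c ∈ M,
      mul (mul (mul a b) a) c = mul a (mul b (mul a c))) := by
  let σ' : G →* G := MonoidHom.mk' σ hσhom
  let ρ' : G →* G := MonoidHom.mk' ρ hρhom
  have h : IsTriality σ' ρ' :=
    { involutive := congrFun hσ2
      map_map_map := congrFun hρ3
      involutive_comp := congrFun hσρ2
      mul_map_mul_map_map := by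
        rintro _ ⟨g, rfl⟩
        exact htriality g }
  obtain rfl : M = twistedClassOne σ' := hM
  obtain rfl : mul = trialityMul ρ' := funext₂ hmul
  refine ⟨?_, one_mem_twistedClassOne, ?_, ?_, ?_⟩
  · exact fun _ hm _ hn => h.trialityMul_mem hm hn
  · exact fun m hm => ⟨one_trialityMul m, h.trialityMul_one hm⟩
  · exact fun a ha b hb =>
      ⟨h.existsUnique_trialityMul_left_eq ha hb, h.existsUnique_trialityMul_right_eq ha hb⟩
  · exact fun _ ha _ hb c _ => h.trialityMul_left_moufang ha hb c
end

section
/- Let L be a Moufang loop in which every associator satisfies (x,y,z)·(x,y,z) = 1 and in which every commutator [a,b] and every associator (a,b,c) is central. Then for all x, y, z ∈ L: [x·y, z] = ([x,z]·[y,z])·(x,y,z). -/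
/-- A Moufang loop: a type with a multiplication `·` and an identity `1` such that
`1·x = x·1 = x`, the equations `a·x = b` and `y·a = b` have unique solutions, and the
left Moufang identity `((x·y)·x)·z = x·(y·(x·z))` holds. -/
class MoufangLoop (L : Type*) extends Mul L, One L where
  one_mul : ∀ x : L, 1 * x = x
  mul_one : ∀ x : L, x * 1 = x
  existsUnique_mul_left : ∀ a b : L, ∃! x : L, a * x = b
  existsUnique_mul_right : ∀ a b : L, ∃! y : L, y * a = b
  moufang : ∀ x y z : L, ((x * y) * x) * z = x * (y * (x * z))

namespace MoufangLoop

variable {L : Type*} [MoufangLoop L]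

/-- The loop commutator `[a,b]`: the unique element with `a·b = (b·a)·[a,b]`. -/
noncomputable def comm (a b : L) : L :=
  (existsUnique_mul_left (b * a) (a * b)).choose

theorem comm_spec (a b : L) : (b * a) * comm a b = a * b :=
  (existsUnique_mul_left (b * a) (a * b)).choose_spec.1

/-- The loop associator `(a,b,c)`: the unique element with `(a·b)·c = (a·(b·c))·(a,b,c)`. -/
noncomputable def assoc (a b c : L) : L :=
  (existsUnique_mul_left (a * (b * c)) ((a * b) * c)).choose

theorem assoc_spec (a b c : L) : (a * (b * c)) * assoc a b c = (a * b) * c :=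
  (existsUnique_mul_left (a * (b * c)) ((a * b) * c)).choose_spec.1

/-- An element `z` is central if it commutes with every element and every associator
involving it is trivial. -/
def IsCentral (z : L) : Prop :=
  (∀ x : L, z * x = x * z) ∧
  ∀ x y : L, assoc z x y = 1 ∧ assoc x z y = 1 ∧ assoc x y z = 1

end MoufangLoop

/-!
Let `A(x, y, z)` denote the associator. When associators are central, they can be pulled out of
products, so each Moufang identity becomes a relation between values of `A` in the abelian group of
central elements. Reassociating `(xy)(zx) = (x(yz))x` gives `A(xy, z, x) = A(x, y, z)`; together
with `x⁻¹(xy) = y` and `(xy)⁻¹ = y⁻¹x⁻¹` this forces `A` to be alternating. Moving `z` to the left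
past `y` and `x` in `(xy)z` then costs `[y, z]`, `[x, z]` and three associators, each of which
equals `A(x, y, z)`. So `[xy, z] = [x, z][y, z](x, y, z)³`, and the cube is the associator itself
when associators square to `1`.
-/

namespace MoufangLoop

open Submonoid (center)

variable {L : Type*} [MoufangLoop L]

instance : MulOneClass L where
  one_mul := MoufangLoop.one_mul
  mul_one := MoufangLoop.mul_one

instance : IsCancelMul L where
  mul_left_cancel a _ y h := (existsUnique_mul_left a (a * y)).unique h rfl
  mul_right_cancel a _ y h := (existsUnique_mul_right a (y * a)).unique h rfl

/-- The inverse in a Moufang loop, chosen as the right inverse; by `inv_mul_cancel` it is also a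
left inverse. -/
noncomputable instance : Inv L where
  inv x := (existsUnique_mul_left x 1).choose

theorem mul_inv_cancel (x : L) : x * x⁻¹ = 1 :=
  (existsUnique_mul_left x 1).choose_spec.1

theorem inv_mul_cancel_left (x y : L) : x⁻¹ * (x * y) = y := by
  have h := moufang x x⁻¹ y
  rw [mul_inv_cancel, one_mul] at h
  exact (mul_left_cancel h).symm

theorem inv_mul_cancel (x : L) : x⁻¹ * x = 1 := by
  simpa only [mul_one] using inv_mul_cancel_left x 1

noncomputable instance : InvolutiveInv L where
  inv_inv x := mul_left_cancel (a := x⁻¹) (by rw [mul_inv_cancel, inv_mul_cancel])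

theorem mul_inv_cancel_left (x y : L) : x * (x⁻¹ * y) = y := by
  simpa only [inv_inv] using inv_mul_cancel_left x⁻¹ y

theorem mul_inv_cancel_right (y x : L) : y * x * x⁻¹ = y := by
  have h := moufang x (x⁻¹ * y) x⁻¹
  rwa [mul_inv_cancel, mul_one, mul_inv_cancel_left] at h

theorem inv_mul_cancel_right (y x : L) : y * x⁻¹ * x = y := by
  simpa only [inv_inv] using mul_inv_cancel_right y x⁻¹

theorem mul_inv_rev (x y : L) : (x * y)⁻¹ = y⁻¹ * x⁻¹ := by
  have h : (x * y)⁻¹ * x = y⁻¹ := by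
    simpa only [mul_inv_cancel_right] using inv_mul_cancel_left (x * y) y⁻¹
  rw [← h, mul_inv_cancel_right]

theorem middle_moufang (x y z : L) : x * y * (z * x) = x * (y * z) * x := by
  have h : x * (y * z) * x * (z * x)⁻¹ = x * y := by
    rw [moufang, mul_inv_rev, mul_inv_cancel_left, mul_inv_cancel_right]
  rw [← h, inv_mul_cancel_right]

theorem IsCentral.mem_center {z : L} (hz : IsCentral z) : z ∈ center L := by
  have left_assoc (x y : L) : z * (x * y) = z * x * y := by
    simpa only [(hz.2 x y).1, mul_one] using assoc_spec z x y
  have right_assoc (x y : L) : x * y * z = x * (y * z) := by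
    simpa only [(hz.2 x y).2.2, mul_one] using (assoc_spec x y z).symm
  exact ⟨hz.1, left_assoc, right_assoc⟩

theorem inv_mem_center {z : L} (hz : z ∈ center L) : z⁻¹ ∈ center L where
  comm x := mul_left_cancel (a := z) <| by
    rw [mul_inv_cancel_left, hz.left_assoc, hz.comm, mul_inv_cancel_right]
  left_assoc x y := mul_left_cancel (a := z) <| by
    rw [mul_inv_cancel_left, hz.left_assoc, mul_inv_cancel_left]
  right_assoc x y := mul_right_cancel (b := z) <| by
    rw [inv_mul_cancel_right, hz.right_assoc, inv_mul_cancel_right]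

noncomputable instance : CommGroup (center L) where
  __ := center.commMonoid'
  inv z := ⟨(z : L)⁻¹, inv_mem_center z.2⟩
  inv_mul_cancel z := Subtype.ext (inv_mul_cancel (z : L))

noncomputable instance : MulAction (center L) L where
  one_smul := one_mul
  mul_smul a b x := (a.2.left_assoc b x).symm

instance : IsScalarTower (center L) L L where
  smul_assoc c x y := (c.2.left_assoc x y).symm

instance : SMulCommClass (center L) L L where
  smul_comm c x y := c.2.left_comm x y

instance : IsCancelSMul (center L) L where
  left_cancel' _ _ _ h := mul_left_cancel h
  right_cancel' _ _ _ h := Subtype.ext (mul_right_cancel h)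

theorem inv_center_smul (c : center L) (x : L) : (c • x)⁻¹ = c⁻¹ • x⁻¹ := by
  apply mul_left_cancel (a := c • x)
  rw [mul_inv_cancel, smul_mul_assoc, mul_smul_comm, smul_smul, mul_inv_cancel,
    _root_.mul_inv_cancel, one_smul]

theorem comm_smul_mul {x y : L} (h : IsCentral (comm x y)) :
    (⟨comm x y, h.mem_center⟩ : center L) • (y * x) = x * y :=
  (h.1 (y * x)).trans (comm_spec x y)

theorem comm_eq_of_mul_eq_smul {x y : L} {c : center L} (h : x * y = c • (y * x)) :
    comm x y = c := by
  apply mul_left_cancel (a := y * x)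
  rw [comm_spec, h]
  exact c.2.comm (y * x)

/-- Moufang loops all of whose associators are central; the class lets `centralAssoc` take values
in the center without carrying a proof of centrality. -/
class HasCentralAssoc (L : Type*) [MoufangLoop L] : Prop where
  isCentral_assoc (x y z : L) : IsCentral (assoc x y z)

section CentralAssoc

variable [HasCentralAssoc L]

/-- The associator as an element of the center, so that it can be inverted in the commutative group
`center L` and pulled out of products as a scalar. -/
noncomputable def centralAssoc (x y z : L) : center L :=
  ⟨assoc x y z, (HasCentralAssoc.isCentral_assoc x y z).mem_center⟩

theorem mul_mul_eq_centralAssoc_smul (x y z : L) :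
    x * y * z = centralAssoc x y z • (x * (y * z)) := by
  rw [← assoc_spec]
  exact ((centralAssoc x y z).2.comm _).symm

theorem centralAssoc_mul_self (x y z : L) : centralAssoc (x * y) z x = centralAssoc x y z := by
  apply IsCancelSMul.right_cancel (c := x * y * (z * x))
  rw [← mul_mul_eq_centralAssoc_smul, mul_mul_eq_centralAssoc_smul x y z, smul_mul_assoc,
    middle_moufang]

theorem centralAssoc_inv_mul (x y z : L) :
    centralAssoc x⁻¹ (x * y) z = (centralAssoc x y z)⁻¹ := by
  rw [eq_inv_iff_mul_eq_one]
  apply IsCancelSMul.eq_one_of_smul (x := y * z)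
  calc (centralAssoc x⁻¹ (x * y) z * centralAssoc x y z) • (y * z)
      = centralAssoc x⁻¹ (x * y) z • (x⁻¹ * (centralAssoc x y z • (x * (y * z)))) := by
        rw [mul_smul_comm, inv_mul_cancel_left, mul_smul]
    _ = y * z := by
        rw [← mul_mul_eq_centralAssoc_smul, ← mul_mul_eq_centralAssoc_smul, inv_mul_cancel_left]

theorem centralAssoc_inv_left_eq_rotate (x y z : L) :
    centralAssoc x⁻¹ y z = (centralAssoc y z x)⁻¹ := by
  have h := centralAssoc_inv_mul x⁻¹ y z
  rw [inv_inv, ← centralAssoc_mul_self, mul_inv_cancel_left] at h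
  rw [h, inv_inv]

theorem centralAssoc_inv_inv_inv (x y z : L) :
    centralAssoc x⁻¹ y⁻¹ z⁻¹ = (centralAssoc x y z)⁻¹ := by
  simp only [centralAssoc_inv_left_eq_rotate, inv_inv]

theorem centralAssoc_inv_reverse (x y z : L) :
    centralAssoc z⁻¹ y⁻¹ x⁻¹ = centralAssoc x y z := by
  apply IsCancelSMul.right_cancel (c := z⁻¹ * (y⁻¹ * x⁻¹))
  calc centralAssoc z⁻¹ y⁻¹ x⁻¹ • (z⁻¹ * (y⁻¹ * x⁻¹))
      = (x * (y * z))⁻¹ := by rw [← mul_mul_eq_centralAssoc_smul, mul_inv_rev, mul_inv_rev]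
    _ = centralAssoc x y z • (x * y * z)⁻¹ := by
        rw [mul_mul_eq_centralAssoc_smul, inv_center_smul, smul_inv_smul]
    _ = centralAssoc x y z • (z⁻¹ * (y⁻¹ * x⁻¹)) := by rw [mul_inv_rev, mul_inv_rev]

theorem centralAssoc_reverse (x y z : L) :
    centralAssoc z y x = (centralAssoc x y z)⁻¹ := by
  rw [← centralAssoc_inv_reverse x y z, centralAssoc_inv_inv_inv, inv_inv]

theorem centralAssoc_mul_mul (x y z : L) :
    centralAssoc x y (x * y * z) = centralAssoc x y z := by
  have invert (w : L) : centralAssoc y⁻¹ x⁻¹ w = (centralAssoc x y w)⁻¹ := by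
    rw [← centralAssoc_inv_left_eq_rotate, ← centralAssoc_inv_reverse, inv_inv, inv_inv]
  have cancel : centralAssoc y⁻¹ x⁻¹ (x * y * z) * centralAssoc x y z = 1 := by
    apply IsCancelSMul.eq_one_of_smul (x := z)
    calc (centralAssoc y⁻¹ x⁻¹ (x * y * z) * centralAssoc x y z) • z
        = centralAssoc y⁻¹ x⁻¹ (x * y * z) •
            (y⁻¹ * (x⁻¹ * (centralAssoc x y z • (x * (y * z))))) := by
          rw [mul_smul_comm, mul_smul_comm, inv_mul_cancel_left, inv_mul_cancel_left, mul_smul]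
      _ = (x * y)⁻¹ * (x * y * z) := by
          rw [← mul_mul_eq_centralAssoc_smul x, ← mul_mul_eq_centralAssoc_smul, mul_inv_rev]
      _ = z := inv_mul_cancel_left (x * y) z
  rwa [invert, inv_mul_eq_one] at cancel

theorem centralAssoc_mul_right (x y z : L) :
    centralAssoc x y (y * z) = centralAssoc x y z := by
  simpa only [inv_mul_cancel_left, centralAssoc_inv_mul, inv_inj] using
    centralAssoc_mul_mul x⁻¹ (x * y) z

theorem centralAssoc_mul_middle (x y z : L) :
    centralAssoc x (x * y) z = centralAssoc x y z := by
  simpa only [centralAssoc_inv_left_eq_rotate, inv_inj] using centralAssoc_mul_right z⁻¹ x y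

theorem centralAssoc_inv_left (x y z : L) :
    centralAssoc x⁻¹ y z = (centralAssoc x y z)⁻¹ := by
  have h := centralAssoc_inv_mul x⁻¹ y z
  rw [inv_inv, ← centralAssoc_mul_middle, mul_inv_cancel_left] at h
  rw [h, inv_inv]

theorem centralAssoc_rotate (x y z : L) : centralAssoc y z x = centralAssoc x y z := by
  rw [← inv_inj, ← centralAssoc_inv_left_eq_rotate, centralAssoc_inv_left]

theorem centralAssoc_swap_right (x y z : L) :
    centralAssoc x z y = (centralAssoc x y z)⁻¹ := by
  rw [← centralAssoc_reverse, centralAssoc_rotate x z y]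

end CentralAssoc

end MoufangLoop

open MoufangLoop Submonoid in
theorem comm_mul_general {L : Type*} [MoufangLoop L] {x y z : L}
    (hassoc : ∀ a b c : L, IsCentral (assoc a b c))
    (hxz : IsCentral (comm x z)) (hyz : IsCentral (comm y z)) :
    comm (x * y) z =
      comm x z * comm y z * (assoc x y z * (assoc x y z * assoc x y z)) := by
  have : HasCentralAssoc L := ⟨hassoc⟩
  set p : center L := ⟨comm x z, hxz.mem_center⟩
  set q : center L := ⟨comm y z, hyz.mem_center⟩
  set A : center L := centralAssoc x y z
  refine comm_eq_of_mul_eq_smul (c := p * q * (A * (A * A))) ?_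
  calc x * y * z
      = A • (x * (y * z)) := mul_mul_eq_centralAssoc_smul x y z
    _ = (A * q) • (x * (z * y)) := by rw [← comm_smul_mul hyz, mul_smul_comm, mul_smul]
    _ = (A * q * A) • (x * z * y) := by
        rw [mul_mul_eq_centralAssoc_smul x z y, centralAssoc_swap_right x y z, smul_smul,
          _root_.mul_inv_cancel_right]
    _ = (A * q * A * p) • (z * x * y) := by rw [← comm_smul_mul hxz, smul_mul_assoc, smul_smul]
    _ = (A * q * A * p * A) • (z * (x * y)) := by
        rw [mul_mul_eq_centralAssoc_smul z x y, ← centralAssoc_rotate z x y, smul_smul]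
    _ = (p * q * (A * (A * A))) • (z * (x * y)) := by
        congr 1
        ac_rfl

open MoufangLoop in
/-- STATEMENT 17: in a Moufang loop in which every associator squares to `1` and all
commutators and associators are central, `[x·y, z] = ([x,z]·[y,z])·(x,y,z)`. -/
theorem comm_mul {L : Type*} [MoufangLoop L]
    (hsq : ∀ x y z : L, assoc x y z * assoc x y z = 1)
    (hcomm : ∀ a b : L, IsCentral (comm a b))
    (hassoc : ∀ a b c : L, IsCentral (assoc a b c)) :
    ∀ x y z : L, comm (x * y) z = (comm x z * comm y z) * assoc x y z := by
  intro x y z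
  rw [comm_mul_general hassoc (hcomm x z) (hcomm y z), hsq, MoufangLoop.mul_one]
end
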